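/- arXiv:1307.5408 — 2 statements merged into one kernel-verified Lean document; each statement's English description precedes it below -/
import Mathlib

section
/- Let K be an algebraically closed field of characteristic 0 and let U be a divisible subgroup of Kˣ such that δ(y) := 2·trdeg(ℚ(y)/ℚ) − ldim(y) ≥ 0 for every finite tuple y from U. Let n ≥ 1 and let W ⊆ (Kˣ)ⁿ be an irreducible variety defined over ℚ with dim W < n/2. Suppose given: (a) proper subtori T₁, …, T_s of (Kˣ)ⁿ such that the minimal torus of every cd-maximal irreducible subvariety of W either equals (Kˣ)ⁿ or belongs to {T₁, …, T_s}; (b) for each i, an integer k_i×n matrix M_i of rank k_i with T_i = {y : y^{M_i} = 1}, and W_i ⊆ (Kˣ)^{k_i} the Zariski closure of {y^{M_i} : y ∈ W}; (c) for each i such that W_i is a proper subvariety of (Kˣ)^{k_i}, proper algebraic subgroups H_{i1}, …, H_{i r_i} of (Kˣ)^{k_i} with W_i ∩ Tor^{k_i} ⊆ ⋃_{j=1}^{r_i} H_{ij}. Set W* = ⋃_{i=1}^{s} { b ∈ W : dim(W ∩ b·T_i) > dim W − dim W_i }. Then for every b ∈ (W ∖ W*) ∩ Uⁿ there exist i ∈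 {1,…,s} with W_i a proper subvariety of (Kˣ)^{k_i} and j ∈ {1,…,r_i} such that b^{M_i} ∈ H_{ij}. -/
namespace BadFields

variable (K : Type) [Field K]

/-- The divisible hull `⟨A⟩` of a subset `A ⊆ Kˣ`: all `x` with `x ^ k` in the subgroup
generated by `A` for some `k ≥ 1`.  Note that `⟨∅⟩` is exactly the group of roots of unity. -/
def divHull (A : Set Kˣ) : Subgroup Kˣ where
  carrier := {x | ∃ k : ℕ, k ≠ 0 ∧ x ^ k ∈ Subgroup.closure A}
  one_mem' := ⟨1, one_ne_zero, by simpa using Subgroup.one_mem _⟩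
  mul_mem' := by
    rintro x y ⟨k, hk, hx⟩ ⟨l, hl, hy⟩
    refine ⟨k * l, mul_ne_zero hk hl, ?_⟩
    rw [mul_pow]
    exact Subgroup.mul_mem _ (by rw [pow_mul]; exact Subgroup.pow_mem _ hx l)
      (by rw [mul_comm k l, pow_mul]; exact Subgroup.pow_mem _ hy k)
  inv_mem' := by
    rintro x ⟨k, hk, hx⟩
    exact ⟨k, hk, by rw [inv_pow]; exact Subgroup.inv_mem _ hx⟩

/-- A subgroup `U` of `Kˣ` is divisible if every element has `k`-th roots in `U` for all
`k ≥ 1`. -/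
def DivisibleSub (U : Subgroup Kˣ) : Prop :=
  ∀ u ∈ U, ∀ k : ℕ, k ≠ 0 → ∃ v ∈ U, v ^ k = u

/-- The lattice of multiplicative relations of the tuple `y` modulo the divisible hull of `A`.
Since `Kˣ/⟨A⟩` is torsion-free, this lattice is saturated, and the dimension of the
`ℚ`-subspace of `Kˣ/Tor` spanned by (the images of) `y` over (the image of) `A` equals
`n` minus the rank of this lattice. -/
def relLattice (A : Set Kˣ) {n : ℕ} (y : Fin n → Kˣ) : Submodule ℤ (Fin n → ℤ) where
  carrier := {c | (∏ i, y i ^ c i) ∈ divHull K A}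
  zero_mem' := by simpa using Subgroup.one_mem _
  add_mem' := by
    intro c d hc hd
    have h : (∏ i, y i ^ (c + d) i) = (∏ i, y i ^ c i) * ∏ i, y i ^ d i := by
      rw [← Finset.prod_mul_distrib]
      exact Finset.prod_congr rfl fun i _ => by rw [Pi.add_apply, zpow_add]
    show (∏ i, y i ^ (c + d) i) ∈ divHull K A
    rw [h]
    exact Subgroup.mul_mem _ hc hd
  smul_mem' := by
    intro m c hc
    have h : (∏ i, y i ^ (m • c) i) = (∏ i, y i ^ c i) ^ m := by
      rw [← Finset.prod_zpow]
      exact Finset.prod_congr rfl fun i _ => by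
        rw [Pi.smul_apply, smul_eq_mul, mul_comm, zpow_mul]
    show (∏ i, y i ^ (m • c) i) ∈ divHull K A
    rw [h]
    exact Subgroup.zpow_mem _ hc m

/-- `ldimRel K A y` is the linear dimension `ldim(y/A)`: the dimension of the `ℚ`-subspace
spanned by the images of the coordinates of `y` in `Kˣ/Tor` over the subspace spanned by the
image of `A`. -/
noncomputable def ldimRel (A : Set Kˣ) {n : ℕ} (y : Fin n → Kˣ) : ℕ :=
  n - Module.finrank ℤ (relLattice K A y)

/-- The (absolute) linear dimension `ldim(y)`. -/
noncomputable def ldim {n : ℕ} (y : Fin n → Kˣ) : ℕ := ldimRel K ∅ y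

/-- `trdegOver K F s` : the transcendence degree over the subfield `F` of the field generated
by `F` and the set `s`, i.e. the maximal cardinality of a finite subset of `s` which is
algebraically independent over `F`. -/
noncomputable def trdegOver (F : Subfield K) (s : Set K) : ℕ :=
  sSup {d | ∃ t : Finset K, ↑t ⊆ s ∧ t.card = d ∧
    AlgebraicIndependent F (fun x : {y : K // y ∈ t} => (x : K))}

/-- Transcendence degree over the prime field; in characteristic zero this is
`trdeg(ℚ(s)/ℚ)`. -/
noncomputable def trdegQ (s : Set K) : ℕ := trdegOver K ⊥ s

section Var

variable {ι : Type} [Fintype ι]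

/-- The subset of the torus `(Kˣ)^ι` cut out by a set of polynomials. -/
def zeroSet (S : Set (MvPolynomial ι K)) : Set (ι → Kˣ) :=
  {x | ∀ p ∈ S, MvPolynomial.eval (fun i => (x i : K)) p = 0}

/-- Zariski closed subsets of the torus `(Kˣ)^ι` (closed subvarieties). -/
def IsZClosed (V : Set (ι → Kˣ)) : Prop := ∃ S, V = zeroSet K S

/-- Zariski closed subsets of `(Kˣ)^ι` defined by polynomials all of whose coefficients lie
in `E`; for `E = ↑(⊥ : Subfield K)` (the prime field, i.e. `ℚ` in characteristic `0`) this
means defined over `ℚ`. -/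
def IsClosedOver (E : Set K) (V : Set (ι → Kˣ)) : Prop :=
  ∃ S : Set (MvPolynomial ι K),
    (∀ p ∈ S, ∀ m, MvPolynomial.coeff m p ∈ E) ∧ V = zeroSet K S

/-- Irreducible (nonempty) Zariski closed subsets of the torus `(Kˣ)^ι`. -/
def IsIrredVar (V : Set (ι → Kˣ)) : Prop :=
  IsZClosed K V ∧ V.Nonempty ∧
    ∀ C₁ C₂ : Set (ι → Kˣ), IsZClosed K C₁ → IsZClosed K C₂ →
      V ⊆ C₁ ∪ C₂ → V ⊆ C₁ ∨ V ⊆ C₂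

/-- The Zariski closure in `(Kˣ)^ι`. -/
def zcl (S : Set (ι → Kˣ)) : Set (ι → Kˣ) := ⋂₀ {C | IsZClosed K C ∧ S ⊆ C}

/-- The locus of a point `b` over the set of constants `E`: the smallest Zariski closed
set containing `b` defined by polynomials with coefficients in `E`. -/
def locusOver (E : Set K) (b : ι → Kˣ) : Set (ι → Kˣ) :=
  ⋂₀ {C | IsClosedOver K E C ∧ b ∈ C}

/-- The dimension of a (not necessarily irreducible) Zariski closed subset of `(Kˣ)^ι`:
the supremum of the lengths of strict chains of irreducible closed subsets. -/
noncomputable def vdim (V : Set (ι → Kˣ)) : ℕ :=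
  sSup {d | ∃ W : Fin (d + 1) → Set (ι → Kˣ),
    (∀ i, IsIrredVar K (W i) ∧ W i ⊆ V) ∧ StrictMono W}

/-- The monomial map `y ↦ y^M` attached to an integer matrix `M`. -/
def mpow {k : ℕ} (M : Matrix (Fin k) ι ℤ) (y : ι → Kˣ) : Fin k → Kˣ :=
  fun j => ∏ i, y i ^ M j i

/-- Algebraic subgroups of the torus `(Kˣ)^ι`: subgroups defined by finitely many monomial
equations `y^M = 1`. -/
def IsAlgSubgroup (H : Set (ι → Kˣ)) : Prop :=
  ∃ (k : ℕ) (M : Matrix (Fin k) ι ℤ), H = {y | mpow K M y = 1}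

/-- Subtori of `(Kˣ)^ι`: irreducible algebraic subgroups. -/
def IsSubtorus (T : Set (ι → Kˣ)) : Prop := IsAlgSubgroup K T ∧ IsIrredVar K T

/-- The coset `c · T` (multiplication coordinatewise). -/
def coset (c : ι → Kˣ) (T : Set (ι → Kˣ)) : Set (ι → Kˣ) := (fun t => c * t) '' T

/-- A variety is free if it is not contained in a coset of a proper subtorus. -/
def IsFree (V : Set (ι → Kˣ)) : Prop :=
  ¬ ∃ T c, IsSubtorus K T ∧ T ≠ Set.univ ∧ V ⊆ coset K c T

/-- `T` is the minimal torus of `V`: the smallest subtorus such that `V` is contained in some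
coset of it. -/
def IsMinTorus (V T : Set (ι → Kˣ)) : Prop :=
  IsSubtorus K T ∧ (∃ c, V ⊆ coset K c T) ∧
    ∀ T', IsSubtorus K T' → (∃ c, V ⊆ coset K c T') → T ⊆ T'

/-- The codimension `cd(V) = dim(minimal torus of V) - dim V`. -/
noncomputable def cd (V : Set (ι → Kˣ)) : ℕ :=
  sInf {d | ∃ T c, IsSubtorus K T ∧ V ⊆ coset K c T ∧ d = vdim K T} - vdim K V

/-- `S` is cd-maximal in `W`. -/
def CdMaximal (S W : Set (ι → Kˣ)) : Prop :=
  IsIrredVar K S ∧ S ⊆ W ∧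
    ∀ S', IsIrredVar K S' → S ⊂ S' → S' ⊆ W → cd K S < cd K S'

/-- `√[m]{V}`, the preimage of `V` under coordinatewise `m`-th powers. -/
def mroot (m : ℕ) (V : Set (ι → Kˣ)) : Set (ι → Kˣ) := {a | (fun i => a i ^ m) ∈ V}

/-- An irreducible variety `V` is Kummer generic if `√[m]{V}` is irreducible for all `m ≥ 1`. -/
def KummerGeneric (V : Set (ι → Kˣ)) : Prop :=
  IsIrredVar K V ∧ ∀ m : ℕ, 1 ≤ m → IsIrredVar K (mroot K m V)

/-- Irreducible components of a set `S`: maximal irreducible closed subsets of `S`. -/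
def IsIrredComponent (V' S : Set (ι → Kˣ)) : Prop :=
  IsIrredVar K V' ∧ V' ⊆ S ∧ ∀ W, IsIrredVar K W → V' ⊆ W → W ⊆ S → W = V'

end Var

/-- A correspondence torus: an `n`-dimensional subtorus of `(Kˣ)ⁿ × (Kˣ)ⁿ` which projects
onto `(Kˣ)ⁿ` in both coordinates.  We identify `(Kˣ)ⁿ × (Kˣ)ⁿ` with `(Kˣ)^(Fin n ⊕ Fin n)`,
a pair `(x, y)` corresponding to `Sum.elim x y`. -/
def IsCorrTorus {n : ℕ} (T : Set ((Fin n ⊕ Fin n) → Kˣ)) : Prop :=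
  IsSubtorus K T ∧ vdim K T = n ∧
    (∀ x : Fin n → Kˣ, ∃ y, Sum.elim x y ∈ T) ∧
    (∀ y : Fin n → Kˣ, ∃ x, Sum.elim x y ∈ T)

/-- `T` induces a toric correspondence between `V` and `V'`: the Zariski closures of the two
projections of `(V × V') ∩ T` are `V` and `V'` respectively. -/
def ToricCorr {n : ℕ} (T : Set ((Fin n ⊕ Fin n) → Kˣ)) (V V' : Set (Fin n → Kˣ)) : Prop :=
  zcl K ((fun p => p ∘ Sum.inl) '' {p | p ∈ T ∧ (p ∘ Sum.inl) ∈ V ∧ (p ∘ Sum.inr) ∈ V'}) = V ∧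
  zcl K ((fun p => p ∘ Sum.inr) '' {p | p ∈ T ∧ (p ∘ Sum.inl) ∈ V ∧ (p ∘ Sum.inr) ∈ V'}) = V'

/-- The set of elements of `K` underlying a set of units. -/
def unitSet (A : Set Kˣ) : Set K := (fun u : Kˣ => (u : K)) '' A

/-- `trdeg(y/A)`, the transcendence degree of `ℚ(A ∪ y)` over `ℚ(A)`. -/
noncomputable def trdegRel (A : Set Kˣ) {n : ℕ} (y : Fin n → Kˣ) : ℕ :=
  trdegOver K (Subfield.closure (unitSet K A)) (Set.range fun i => (y i : K))

/-- The predimension `δ(y/A) = 2 trdeg(y/A) - ldim(y/A)`. -/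
noncomputable def pdelta (A : Set Kˣ) {n : ℕ} (y : Fin n → Kˣ) : ℤ :=
  2 * (trdegRel K A y : ℤ) - (ldimRel K A y : ℤ)

/-- The extension `⟨A ∪ b⟩/A` is minimal prealgebraic of length `n`. -/
def MinPrealg {n : ℕ} (A : Set Kˣ) (b : Fin n → Kˣ) : Prop :=
  2 ≤ n ∧ ldimRel K A b = n ∧ pdelta K A b = 0 ∧
    ∀ B' : Set Kˣ, B' = ↑(divHull K B') → A ⊂ B' → B' ⊂ ↑(divHull K (A ∪ Set.range b)) →
      pdelta K B' b < 0

end BadFields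

/-!
Let `k` be the algebraic closure of the prime field in `K` and let `V` be the locus of `b` over `k`.
It is an irreducible subvariety of `W` with a `k`-rational point, of dimension at least
`trdeg b ≥ ldim b / 2`, and it lies in a coset of a torus of dimension `ldim b`, so that
`cd V ≤ dim V`. Choose a cd-maximal `S` in `W` with `V ⊆ S` and `cd S ≤ cd V`; its minimal torus
then has dimension at most `cd V + dim S ≤ 2 dim S`. As `2 dim W < n`, this torus is some
`T_i = {y | y^{M_i} = 1}`, and `S ⊆ W ∩ b T_i` gives `n - k_i ≤ 2 dim (W ∩ b T_i)`. For `b ∉ W*`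
this excludes `dim W_i = k_i`. Finally `y ↦ y^{M_i}` is constant on `V`, which has a `k`-rational
point, so `b^{M_i}` is a tuple from `U` with algebraic coordinates; by `δ ≥ 0` its linear dimension
vanishes, i.e. its coordinates are roots of unity.
-/

namespace BadFields
open MvPolynomial TopologicalSpace

/-! ### The Zariski topology on the torus -/

section Zariski

variable {K : Type} [Field K] {ι : Type}

/-- The Zariski topology on `(Kˣ)^ι`, induced from the prime spectrum of `K[X]` by sending a point
to its maximal ideal. -/
noncomputable scoped instance zariskiTopology : TopologicalSpace (ι → Kˣ) :=
  .induced (fun x => (pointToPoint fun i => (x i : K) : PrimeSpectrum (MvPolynomial ι K)))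
    inferInstance

lemma mem_preimage_zeroLocus_iff {S : Set (MvPolynomial ι K)} {x : ι → Kˣ} :
    (pointToPoint fun i => (x i : K) : PrimeSpectrum (MvPolynomial ι K)) ∈
      PrimeSpectrum.zeroLocus S ↔ x ∈ zeroSet K S := by
  simp only [PrimeSpectrum.mem_zeroLocus, Set.subset_def, SetLike.mem_coe, zeroSet,
    Set.mem_ofPred_eq]
  exact forall₂_congr fun p _ => mem_vanishingIdeal_singleton_iff _ p

lemma isClosed_iff_isZClosed {V : Set (ι → Kˣ)} : IsClosed V ↔ IsZClosed K V := by
  simp only [isClosed_induced_iff, PrimeSpectrum.isClosed_iff_zeroLocus, IsZClosed]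
  constructor
  · rintro ⟨_, ⟨S, rfl⟩, rfl⟩
    exact ⟨S, Set.ext fun x => mem_preimage_zeroLocus_iff⟩
  · rintro ⟨S, rfl⟩
    exact ⟨_, ⟨S, rfl⟩, Set.ext fun x => mem_preimage_zeroLocus_iff⟩

lemma isClosed_zeroSet (S : Set (MvPolynomial ι K)) : IsClosed (zeroSet K S) :=
  isClosed_iff_isZClosed.mpr ⟨S, rfl⟩

lemma IsClosedOver.isClosed {E : Set K} {V : Set (ι → Kˣ)} (hV : IsClosedOver K E V) :
    IsClosed V :=
  have ⟨S, _, hS⟩ := hV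
  isClosed_iff_isZClosed.mpr ⟨S, hS⟩

lemma IsClosedOver.mono {E E' : Set K} {V : Set (ι → Kˣ)} (hE : E ⊆ E')
    (hV : IsClosedOver K E V) : IsClosedOver K E' V :=
  have ⟨S, hS, hVS⟩ := hV
  ⟨S, fun p hp m => hE (hS p hp m), hVS⟩

lemma isIrredVar_iff {V : Set (ι → Kˣ)} : IsIrredVar K V ↔ IsClosed V ∧ IsIrreducible V := by
  simp only [IsIrredVar, IsIrreducible, isPreirreducible_iff_isClosed_union_isClosed,
    isClosed_iff_isZClosed]

lemma continuous_of_isClosed_eval_eq_zero {X : Type} [TopologicalSpace X] {f : X → ι → Kˣ}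
    (hf : ∀ p : MvPolynomial ι K, IsClosed {x | eval (fun i => (f x i : K)) p = 0}) :
    Continuous f := by
  rw [continuous_iff_isClosed]
  intro C hC
  obtain ⟨S, rfl⟩ := isClosed_iff_isZClosed.mp hC
  have : f ⁻¹' zeroSet K S = ⋂ p ∈ S, {x | eval (fun i => (f x i : K)) p = 0} := by
    ext; simp [zeroSet]
  rw [this]
  exact isClosed_biInter fun p _ => hf p

lemma isClosed_eval_eq_zero (p : MvPolynomial ι K) :
    IsClosed {x : ι → Kˣ | eval (fun i => (x i : K)) p = 0} := by
  simpa [zeroSet] using isClosed_zeroSet {p}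

end Zariski

/-! ### Vanishing ideals and irreducible subvarieties -/

section TorusIdeal

variable {K : Type} [Field K] {ι : Type}

/-- The ideal of the polynomials in `K[X]` vanishing on a subset of the torus `(Kˣ)^ι`. -/
noncomputable def torusIdeal (V : Set (ι → Kˣ)) : Ideal (MvPolynomial ι K) :=
  vanishingIdeal K ((fun x i => (x i : K)) '' V)

lemma mem_torusIdeal {V : Set (ι → Kˣ)} {p : MvPolynomial ι K} :
    p ∈ torusIdeal V ↔ ∀ x ∈ V, eval (fun i => (x i : K)) p = 0 := by
  simp [torusIdeal, mem_vanishingIdeal_iff]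

lemma zeroSet_torusIdeal {V : Set (ι → Kˣ)} (hV : IsClosed V) :
    zeroSet K (torusIdeal V : Set (MvPolynomial ι K)) = V := by
  obtain ⟨S, rfl⟩ := isClosed_iff_isZClosed.mp hV
  exact subset_antisymm (fun x hx p hp => hx p (mem_torusIdeal.mpr fun y hy => hy p hp))
    fun x hx p hp => mem_torusIdeal.mp hp x hx

lemma isIrreducible_iff_isPrime_torusIdeal {V : Set (ι → Kˣ)} :
    IsIrreducible V ↔ (torusIdeal V).IsPrime := by
  rw [IsIrreducible, isPreirreducible_iff_isClosed_union_isClosed]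
  constructor
  · rintro ⟨⟨x, hx⟩, hV⟩
    refine ⟨(Ideal.ne_top_iff_one _).mpr fun h => by simpa using mem_torusIdeal.mp h x hx,
      fun {p q} hpq => ?_⟩
    have hcover : V ⊆ {x | eval (fun i => (x i : K)) p = 0} ∪
        {x | eval (fun i => (x i : K)) q = 0} :=
      fun y hy => mul_eq_zero.mp (by rw [← map_mul]; exact mem_torusIdeal.mp hpq y hy)
    exact (hV _ _ (isClosed_eval_eq_zero p) (isClosed_eval_eq_zero q) hcover).imp
      mem_torusIdeal.mpr mem_torusIdeal.mpr
  · refine fun hP => ⟨?_, fun C₁ C₂ h₁ h₂ hcover => ?_⟩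
    · by_contra! hempty
      exact hP.one_notMem (mem_torusIdeal.mpr (by simp [hempty]))
    · obtain ⟨S₁, rfl⟩ := isClosed_iff_isZClosed.mp h₁
      obtain ⟨S₂, rfl⟩ := isClosed_iff_isZClosed.mp h₂
      by_contra! hnot
      obtain ⟨⟨x₁, hx₁, hx₁'⟩, ⟨x₂, hx₂, hx₂'⟩⟩ :=
        hnot.imp Set.not_subset.mp Set.not_subset.mp
      simp only [zeroSet, Set.mem_ofPred_eq, not_forall] at hx₁' hx₂'
      obtain ⟨⟨p, hp, hpx⟩, q, hq, hqx⟩ := hx₁', hx₂'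
      have hpq : p * q ∈ torusIdeal V := mem_torusIdeal.mpr fun x hx => by
        rw [map_mul, mul_eq_zero]
        exact (hcover hx).imp (fun h => h p hp) fun h => h q hq
      exact (hP.mem_or_mem hpq).elim (fun h => hpx (mem_torusIdeal.mp h x₁ hx₁))
        fun h => hqx (mem_torusIdeal.mp h x₂ hx₂)

instance : T1Space (ι → Kˣ) where
  t1 a := by
    have : {a} = zeroSet K (Set.range fun i => X i - C (a i : K)) := by
      ext x
      simp [zeroSet, sub_eq_zero, funext_iff, Units.ext_iff]
    rw [this]
    exact isClosed_zeroSet _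

section Fintype

variable [Fintype ι]

lemma prod_X_notMem_torusIdeal {V : Set (ι → Kˣ)} (hV : V.Nonempty) :
    (∏ i, X i : MvPolynomial ι K) ∉ torusIdeal V := by
  obtain ⟨x, hx⟩ := hV
  intro h
  have : ∏ i, (x i : K) = 0 := by simpa using mem_torusIdeal.mp h x hx
  exact (Finset.prod_ne_zero_iff.mpr fun i _ => (x i).ne_zero) this

variable [IsAlgClosed K]

/-- Multiplying by the product of the variables turns vanishing on the torus into vanishing on
affine space, where the usual Nullstellensatz applies. -/
lemma torusIdeal_zeroSet (P : Ideal (MvPolynomial ι K)) [hP : P.IsPrime]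
    (hX : ∏ i, X i ∉ P) : torusIdeal (zeroSet K (P : Set (MvPolynomial ι K))) = P := by
  refine le_antisymm (fun p hp => ?_) fun p hp => mem_torusIdeal.mpr fun x hx => hx p hp
  have : p * ∏ i, X i ∈ vanishingIdeal K (zeroLocus K P) := by
    refine mem_vanishingIdeal_iff.mpr fun y hy => ?_
    by_cases hy0 : ∃ i, y i = 0
    · obtain ⟨i, hi⟩ := hy0
      rw [map_mul, map_prod, Finset.prod_eq_zero (Finset.mem_univ i) (by simpa using hi), mul_zero]
    · push Not at hy0
      have hyp := mem_torusIdeal.mp hp (fun i => Units.mk0 (y i) (hy0 i))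
        fun q hq => by simpa [coe_aeval_eq_eval] using hy q hq
      simp only [Units.val_mk0] at hyp
      rw [map_mul, aeval_eq_eval, hyp, zero_mul]
  rw [IsPrime.vanishingIdeal_zeroLocus] at this
  exact (hP.mem_or_mem this).resolve_right hX

lemma isIrreducible_zeroSet (P : Ideal (MvPolynomial ι K)) [hP : P.IsPrime]
    (hX : ∏ i, X i ∉ P) : IsIrreducible (zeroSet K (P : Set (MvPolynomial ι K))) := by
  rwa [isIrreducible_iff_isPrime_torusIdeal, torusIdeal_zeroSet P hX]

end Fintype

variable [Finite ι] [IsAlgClosed K]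

lemma torusIdeal_univ : torusIdeal (Set.univ : Set (ι → Kˣ)) = ⊥ := by
  have := Fintype.ofFinite ι
  have huniv : Set.univ = zeroSet K ((⊥ : Ideal (MvPolynomial ι K)) : Set (MvPolynomial ι K)) := by
    simp [zeroSet]
  rw [huniv, torusIdeal_zeroSet ⊥ fun h => (Finset.prod_ne_zero_iff.mpr fun i _ => X_ne_zero i) h]

lemma isIrreducible_univ : IsIrreducible (Set.univ : Set (ι → Kˣ)) := by
  rw [isIrreducible_iff_isPrime_torusIdeal, torusIdeal_univ]
  exact Ideal.isPrime_bot

end TorusIdeal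

/-! ### Dimension -/

section Dimension

lemma isIrreducible_preimage_val {X : Type} [TopologicalSpace X] {S V : Set X}
    (hS : IsIrreducible S) (hSV : S ⊆ V) : IsIrreducible (Subtype.val ⁻¹' S : Set V) := by
  have : IrreducibleSpace S := Subtype.irreducibleSpace hS
  have himage := (IrreducibleSpace.isIrreducible_univ S).image (Set.inclusion hSV)
    (continuous_inclusion hSV).continuousOn
  rwa [Set.image_univ, Set.range_inclusion] at himage

variable {K : Type} [Field K] {ι κ : Type}

lemma topologicalKrullDim_torus_le [Finite ι] :
    topologicalKrullDim (ι → Kˣ) ≤ (Nat.card ι : WithBot ℕ∞) := by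
  have hind : Topology.IsInducing (fun x : ι → Kˣ =>
    (pointToPoint fun i => (x i : K) : PrimeSpectrum (MvPolynomial ι K))) := ⟨rfl⟩
  simpa [PrimeSpectrum.topologicalKrullDim_eq_ringKrullDim] using hind.topologicalKrullDim_le

lemma krullDim_irredVar_eq {V : Set (ι → Kˣ)} (hV : IsClosed V) :
    Order.krullDim {S : Set (ι → Kˣ) // IsIrredVar K S ∧ S ⊆ V} = topologicalKrullDim V := by
  apply le_antisymm
  · refine Order.krullDim_le_of_strictMono (fun S => ⟨Subtype.val ⁻¹' S.1,
      isIrreducible_preimage_val (isIrredVar_iff.mp S.2.1).2 S.2.2,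
      (isIrredVar_iff.mp S.2.1).1.preimage continuous_subtype_val⟩) fun S S' h => ?_
    have hSS' : S.1 ⊂ S'.1 := h
    change Subtype.val ⁻¹' S.1 ⊂ Subtype.val ⁻¹' S'.1
    obtain ⟨x, hxS', hxS⟩ := Set.exists_of_ssubset hSS'
    exact ⟨Set.preimage_mono hSS'.subset, fun hle =>
      hxS (hle (show ⟨x, S'.2.2 hxS'⟩ ∈ Subtype.val ⁻¹' S'.1 from hxS'))⟩
  · refine Order.krullDim_le_of_strictMono (fun Z => ⟨Subtype.val '' (Z : Set V),
      isIrredVar_iff.mpr ⟨hV.isClosedMap_subtype_val _ Z.isClosed,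
        Z.isIrreducible.image _ continuous_subtype_val.continuousOn⟩, by simp⟩) fun Z Z' h => ?_
    exact Subtype.val_injective.image_strictMono h

/-- `vdim` is only a supremum of natural numbers; the nonemptiness hypothesis excludes the
empty set, of Krull dimension `⊥` but `vdim` equal to `0`. -/
lemma coe_vdim [Finite ι] {V : Set (ι → Kˣ)} (hV : IsClosed V) (hne : V.Nonempty) :
    (vdim K V : WithBot ℕ∞) = topologicalKrullDim V := by
  obtain ⟨N, hN⟩ : ∃ N : ℕ, topologicalKrullDim V = N := by
    have : Nonempty V := hne.to_subtype
    have hle := (topologicalKrullDim_subspace_le (ι → Kˣ) V).trans topologicalKrullDim_torus_le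
    lift topologicalKrullDim V to ℕ∞ using
      Order.krullDim_ne_bot_iff.mpr ⟨({Classical.arbitrary V} : IrreducibleCloseds V)⟩ with D
    lift D to ℕ using by
      rintro rfl
      exact ENat.natCast_ne_top _ (top_le_iff.mp (WithBot.coe_le_coe.mp hle))
    exact ⟨D, rfl⟩
  have hlengths : {d : ℕ | ∃ Z : Fin (d + 1) → Set (ι → Kˣ),
      (∀ i, IsIrredVar K (Z i) ∧ Z i ⊆ V) ∧ StrictMono Z} = Set.Iic N := by
    ext d
    rw [Set.mem_Iic, ← Nat.cast_le (α := WithBot ℕ∞), ← hN, ← krullDim_irredVar_eq hV,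
      Order.le_krullDim_iff]
    constructor
    · rintro ⟨Z, hZ, hmono⟩
      exact ⟨LTSeries.mk d (fun i => ⟨Z i, hZ i⟩) hmono, rfl⟩
    · rintro ⟨l, rfl⟩
      exact ⟨fun i => l i, fun i => (l i).2, l.strictMono⟩
  rw [vdim, hlengths, csSup_Iic, hN]

lemma vdim_le_of_isInducing [Finite ι] [Finite κ] {K' : Type} [Field K'] {V : Set (ι → Kˣ)}
    {V' : Set (κ → K'ˣ)} (hV : IsClosed V) (hV' : IsClosed V') (hne : V.Nonempty) {f : V → V'}
    (hf : Topology.IsInducing f) : vdim K V ≤ vdim K' V' := by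
  obtain ⟨x, hx⟩ := hne
  rw [← Nat.cast_le (α := WithBot ℕ∞), coe_vdim hV ⟨x, hx⟩, coe_vdim hV' ⟨f ⟨x, hx⟩, (f _).2⟩]
  exact hf.topologicalKrullDim_le

lemma vdim_mono [Finite ι] {V V' : Set (ι → Kˣ)} (hV : IsClosed V) (hV' : IsClosed V')
    (hne : V.Nonempty) (h : V ⊆ V') : vdim K V ≤ vdim K V' :=
  vdim_le_of_isInducing hV hV' hne (Topology.IsEmbedding.inclusion h).isInducing

lemma vdim_le_card [Finite ι] {V : Set (ι → Kˣ)} (hV : IsClosed V) (hne : V.Nonempty) :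
    vdim K V ≤ Nat.card ι := by
  rw [← Nat.cast_le (α := WithBot ℕ∞), coe_vdim hV hne]
  exact (topologicalKrullDim_subspace_le _ V).trans topologicalKrullDim_torus_le

lemma vdim_lt_vdim [Finite ι] {S S' : Set (ι → Kˣ)} (hS : IsIrredVar K S)
    (hS' : IsIrredVar K S') (h : S ⊂ S') : vdim K S < vdim K S' := by
  have hcl := (isIrredVar_iff.mp hS).1
  have hcl' := (isIrredVar_iff.mp hS').1
  obtain ⟨l, hl⟩ := Order.le_krullDim_iff.mp
    ((coe_vdim hcl hS.2.1).trans (krullDim_irredVar_eq hcl).symm).le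
  let toSuper : {Z // IsIrredVar K Z ∧ Z ⊆ S} → {Z // IsIrredVar K Z ∧ Z ⊆ S'} :=
    fun Z => ⟨Z.1, Z.2.1, Z.2.2.trans h.subset⟩
  rw [Nat.lt_iff_add_one_le, ← Nat.cast_le (α := WithBot ℕ∞), coe_vdim hcl' hS'.2.1,
    ← krullDim_irredVar_eq hcl', ← hl]
  exact Order.le_krullDim_iff.mpr ⟨(l.map toSuper fun _ _ hlt => hlt).snoc ⟨S', hS', subset_rfl⟩
    (l.last.2.2.trans_ssubset h), rfl⟩

end Dimension

/-! ### A lower bound for the dimension -/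

section LowerBound

lemma ringKrullDim_le_of_isIntegral {R S : Type} [CommRing R] [CommRing S] [Algebra R S]
    [Algebra.IsIntegral R S] (hinj : Function.Injective (algebraMap R S)) :
    ringKrullDim R ≤ ringKrullDim S := by
  have : FaithfulSMul R S := (faithfulSMul_iff_algebraMap_injective R S).mpr hinj
  have : Algebra.HasGoingUp R S := Algebra.HasGoingUp.of_isIntegral
  refine iSup_le fun l => ?_
  obtain ⟨⟨P, hP, hPl⟩⟩ := l.head.asIdeal.nonempty_primesOver (S := S)
  obtain ⟨L, hL, -⟩ := Ideal.exists_ltSeries_of_hasGoingUp l P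
  exact hL ▸ Order.LTSeries.length_le_krullDim L

variable {K : Type} [Field K] {τ : Type} [Fintype τ]

/-- By Noether normalization the ring is integral over a polynomial ring, whose number of variables
is the transcendence degree. -/
lemma card_le_ringKrullDim {A : Type} [CommRing A] [IsDomain A] [Algebra K A]
    [Algebra.FiniteType K A] {x : τ → A} (hx : AlgebraicIndependent K x) :
    (Fintype.card τ : WithBot ℕ∞) ≤ ringKrullDim A := by
  obtain ⟨m, g, hg, hint⟩ := exists_integral_inj_algHom_of_fg K A
  let : Algebra (MvPolynomial (Fin m) K) A := g.toRingHom.toAlgebra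
  have : IsScalarTower K (MvPolynomial (Fin m) K) A :=
    .of_algebraMap_eq fun c => (g.commutes c).symm
  have : Algebra.IsIntegral (MvPolynomial (Fin m) K) A := ⟨hint⟩
  have : FaithfulSMul (MvPolynomial (Fin m) K) A :=
    (faithfulSMul_iff_algebraMap_injective _ _).mpr hg
  have hbasis := (IsTranscendenceBasis.mvPolynomial (Fin m) K).algebraMap_comp (A := A)
  have hcard : Fintype.card τ ≤ m := by
    simpa [← hbasis.cardinalMk_eq_trdeg] using hx.cardinalMk_le_trdeg
  calc (Fintype.card τ : WithBot ℕ∞) ≤ m := Nat.cast_le.mpr hcard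
    _ = ringKrullDim (MvPolynomial (Fin m) K) := by
      simp [MvPolynomial.ringKrullDim_of_isNoetherianRing]
    _ ≤ ringKrullDim A := ringKrullDim_le_of_isIntegral hg

section CoordRing

variable {ι : Type} [Fintype ι]

/-- The coordinate ring of a subvariety `V` of the torus: the coordinate ring of its closure in
affine space, with the product of the variables inverted. -/
abbrev coordRing (V : Set (ι → Kˣ)) : Type :=
  Localization.Away (Ideal.Quotient.mk (torusIdeal V) (∏ i, X i))

variable {V : Set (ι → Kˣ)}

lemma mk_prod_X_ne_zero (hV : V.Nonempty) :
    Ideal.Quotient.mk (torusIdeal V) (∏ i, X i) ≠ 0 := by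
  rw [Ne, Ideal.Quotient.eq_zero_iff_mem]
  exact prod_X_notMem_torusIdeal hV

lemma powers_mk_prod_X_le_nonZeroDivisors (hV : IsIrreducible V) :
    Submonoid.powers (Ideal.Quotient.mk (torusIdeal V) (∏ i, X i)) ≤
      nonZeroDivisors (MvPolynomial ι K ⧸ torusIdeal V) := by
  have := isIrreducible_iff_isPrime_torusIdeal.mp hV
  exact powers_le_nonZeroDivisors_of_noZeroDivisors (mk_prod_X_ne_zero hV.1)

lemma isDomain_coordRing (hV : IsIrreducible V) : IsDomain (coordRing V) :=
  have := isIrreducible_iff_isPrime_torusIdeal.mp hV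
  IsLocalization.isDomain_localization (powers_mk_prod_X_le_nonZeroDivisors hV)

lemma finiteType_coordRing : Algebra.FiniteType K (coordRing V) :=
  have : Algebra.FiniteType (MvPolynomial ι K ⧸ torusIdeal V) (coordRing V) :=
    IsLocalization.finiteType_of_monoid_fg
      (Submonoid.powers (Ideal.Quotient.mk (torusIdeal V) (∏ i, X i))) _
  Algebra.FiniteType.trans (S := MvPolynomial ι K ⧸ torusIdeal V) inferInstance inferInstance

lemma algebraMap_coordRing_eq_zero_iff (hV : IsIrreducible V) {p : MvPolynomial ι K} :
    algebraMap (MvPolynomial ι K) (coordRing V) p = 0 ↔ p ∈ torusIdeal V := by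
  rw [IsScalarTower.algebraMap_apply _ (MvPolynomial ι K ⧸ torusIdeal V) (coordRing V),
    map_eq_zero_iff _ (IsLocalization.injective _ (powers_mk_prod_X_le_nonZeroDivisors hV)),
    Ideal.Quotient.algebraMap_eq, Ideal.Quotient.eq_zero_iff_mem]

lemma isUnit_algebraMap_prod_X :
    IsUnit (algebraMap (MvPolynomial ι K) (coordRing V) (∏ i, X i)) :=
  IsLocalization.Away.algebraMap_isUnit (Ideal.Quotient.mk (torusIdeal V) (∏ i, X i))

lemma comap_algebraMap_coordRing_injective :
    Function.Injective (PrimeSpectrum.comap (algebraMap (MvPolynomial ι K) (coordRing V))) := by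
  rw [IsScalarTower.algebraMap_eq _ (MvPolynomial ι K ⧸ torusIdeal V) (coordRing V),
    PrimeSpectrum.comap_comp]
  exact (PrimeSpectrum.comap_injective_of_surjective _ Ideal.Quotient.mk_surjective).comp
    (PrimeSpectrum.localization_comap_injective _
      (Submonoid.powers (Ideal.Quotient.mk (torusIdeal V) (∏ i, X i))))

variable [IsAlgClosed K]

lemma ringKrullDim_coordRing_le (hV : IsIrredVar K V) : ringKrullDim (coordRing V) ≤ vdim K V := by
  obtain ⟨hcl, hirr⟩ := isIrredVar_iff.mp hV
  let Q (q : PrimeSpectrum (coordRing V)) := q.comap (algebraMap (MvPolynomial ι K) (coordRing V))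
  have hX (q) : ∏ i, X i ∉ (Q q).asIdeal := fun h =>
    q.2.ne_top (Ideal.eq_top_of_isUnit_mem _ h isUnit_algebraMap_prod_X)
  have hsub (q) : zeroSet K ((Q q).asIdeal : Set (MvPolynomial ι K)) ⊆ V := by
    rw [← zeroSet_torusIdeal hcl]
    refine fun x hx p hp => hx p ?_
    change algebraMap _ (coordRing V) p ∈ q.asIdeal
    rw [(algebraMap_coordRing_eq_zero_iff hirr).mpr hp]
    exact zero_mem _
  rw [coe_vdim hcl hirr.1, ← krullDim_irredVar_eq hcl, ← Order.krullDim_orderDual]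
  refine Order.krullDim_le_of_strictMono (fun q => OrderDual.toDual ⟨zeroSet K (Q q).asIdeal,
    isIrredVar_iff.mpr ⟨isClosed_zeroSet _, isIrreducible_zeroSet _ (hX q)⟩, hsub q⟩)
    fun q q' hq => ?_
  change zeroSet K _ ⊂ zeroSet K _
  have hle : Q q ≤ Q q' := Ideal.comap_mono hq.le
  refine LE.le.ssubset_of_ne (fun x hx p hp => hx p (hle hp)) fun heq => hq.ne ?_
  refine comap_algebraMap_coordRing_injective (PrimeSpectrum.ext ?_)
  change (Q q).asIdeal = (Q q').asIdeal
  rw [← torusIdeal_zeroSet _ (hX q), ← torusIdeal_zeroSet _ (hX q'), heq]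

end CoordRing

variable {ι : Type} [IsAlgClosed K]

lemma card_le_vdim [Finite ι] {V : Set (ι → Kˣ)} (hV : IsIrredVar K V) (j : τ → ι)
    (h : ∀ p, rename j p ∈ torusIdeal V → p = 0) : Fintype.card τ ≤ vdim K V := by
  have := Fintype.ofFinite ι
  have hirr := (isIrredVar_iff.mp hV).2
  have := isDomain_coordRing hirr
  have := finiteType_coordRing (V := V)
  have hind : AlgebraicIndependent K fun t =>
      algebraMap (MvPolynomial ι K) (coordRing V) (X (j t)) := by
    refine algebraicIndependent_iff.mpr fun p hp => h p ?_
    rw [← algebraMap_coordRing_eq_zero_iff hirr, ← hp,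
      ← aeval_X_left_apply (rename j p), aeval_rename]
    exact (aeval_algebraMap_apply (coordRing V) (fun t => (X (j t) : MvPolynomial ι K)) p).symm
  exact_mod_cast (card_le_ringKrullDim hind).trans (ringKrullDim_coordRing_le hV)

lemma vdim_univ [Fintype ι] : vdim K (Set.univ : Set (ι → Kˣ)) = Fintype.card ι := by
  apply le_antisymm
  · simpa using vdim_le_card (K := K) (ι := ι) isClosed_univ Set.univ_nonempty
  · refine card_le_vdim (isIrredVar_iff.mpr ⟨isClosed_univ, isIrreducible_univ⟩) id fun p hp => ?_
    simpa [torusIdeal_univ] using hp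

end LowerBound

/-! ### Characters and homomorphisms of tori -/

section Characters

variable {K : Type} [Field K] {ι κ : Type}

lemma exists_natCast_eq_add [Finite ι] {α : Type} (s : Finset α) (c : α → ι → ℤ) :
    ∃ (N : ℕ) (e : α → ι →₀ ℕ), ∀ x ∈ s, ∀ i, (e x i : ℤ) = c x i + N := by
  have := Fintype.ofFinite ι
  refine ⟨∑ x ∈ s, ∑ i, (c x i).natAbs, fun x => Finsupp.equivFunOnFinite.symm fun i =>
    (c x i + (∑ x ∈ s, ∑ i, (c x i).natAbs : ℕ)).toNat, fun x hx i => ?_⟩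
  have : (c x i).natAbs ≤ ∑ x ∈ s, ∑ i, (c x i).natAbs :=
    (Finset.single_le_sum (f := fun i => (c x i).natAbs) (fun _ _ => Nat.zero_le _)
      (Finset.mem_univ i)).trans (Finset.single_le_sum (f := fun x => ∑ i, (c x i).natAbs)
      (fun _ _ => Nat.zero_le _) hx)
  rw [Finsupp.equivFunOnFinite_symm_apply_apply, Int.toNat_of_nonneg (by lia)]

variable [Fintype ι]

/-- The value at `y` of the character `y ↦ y ^ c` of the torus. -/
def chi (y : ι → Kˣ) (c : ι → ℤ) : Kˣ := ∏ i, y i ^ c i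

/-- `c ↦ chi y c` as a linear map, with `Kˣ` written additively. -/
def chiHom (y : ι → Kˣ) : (ι → ℤ) →ₗ[ℤ] Additive Kˣ :=
  Fintype.linearCombination ℤ fun i => Additive.ofMul (y i)

lemma toMul_chiHom (y : ι → Kˣ) (c : ι → ℤ) : (chiHom y c).toMul = chi y c := rfl

lemma chi_zero (y : ι → Kˣ) : chi y 0 = 1 := by simp [chi]

lemma chi_add (y : ι → Kˣ) (c d : ι → ℤ) : chi y (c + d) = chi y c * chi y d := by
  simp [chi, zpow_add, Finset.prod_mul_distrib]

lemma chi_nsmul (y : ι → Kˣ) (m : ℕ) (c : ι → ℤ) : chi y (m • c) = chi y c ^ m := by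
  simp only [← toMul_chiHom, map_nsmul, toMul_nsmul]

lemma chi_mul (y z : ι → Kˣ) (c : ι → ℤ) : chi (y * z) c = chi y c * chi z c := by
  simp [chi, mul_zpow, Finset.prod_mul_distrib]

lemma chi_single [DecidableEq ι] (y : ι → Kˣ) (i : ι) : chi y (Pi.single i 1) = y i := by
  simp [chi, Pi.single_apply]

/-- Multiplying by a high power of the product of the variables turns Laurent polynomials into
polynomials with the same coefficients. -/
lemma isClosedOver_laurent {σ α : Type} [SetLike σ K] [AddSubmonoidClass σ K] {E : σ}
    (s : Finset α) {a : α → K} (ha : ∀ x ∈ s, a x ∈ E) (c : α → ι → ℤ) :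
    IsClosedOver K (E : Set K) {y | ∑ x ∈ s, a x * (chi y (c x) : K) = 0} := by
  classical
  obtain ⟨N, e, he⟩ := exists_natCast_eq_add s c
  have heval (y : ι → Kˣ) : eval (fun i => (y i : K)) (∑ x ∈ s, monomial (e x) (a x)) =
      (∏ i, y i : Kˣ) ^ N * ∑ x ∈ s, a x * (chi y (c x) : K) := by
    rw [map_sum, Finset.mul_sum]
    refine Finset.sum_congr rfl fun x hx => ?_
    have hmonomial : ∏ i, y i ^ e x i = (∏ i, y i) ^ N * chi y (c x) := by
      rw [chi, ← Finset.prod_pow, ← Finset.prod_mul_distrib]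
      refine Finset.prod_congr rfl fun i _ => ?_
      rw [← zpow_natCast, ← zpow_natCast, ← zpow_add, he x hx, add_comm]
    rw [eval_monomial, Finsupp.prod_fintype _ _ (by simp), mul_left_comm]
    exact congrArg (a x * ·) (by exact_mod_cast congrArg Units.val hmonomial)
  refine ⟨{∑ x ∈ s, monomial (e x) (a x)}, ?_, Set.ext fun y => ?_⟩
  · rintro _ rfl m
    rw [coeff_sum]
    refine sum_mem fun x hx => ?_
    rw [coeff_monomial]
    split_ifs
    exacts [ha x hx, zero_mem E]
  · simp only [zeroSet, Set.mem_ofPred_eq, Set.mem_singleton_iff, forall_eq, heval, mul_eq_zero,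
      pow_eq_zero_iff', Units.ne_zero, false_and, false_or]

lemma isClosedOver_chi_eq (E : Subfield K) {u : Kˣ} (hu : (u : K) ∈ E) (c : ι → ℤ) :
    IsClosedOver K (E : Set K) {y | chi y c = u} := by
  have : {y | chi y c = u} = {y | ∑ j, (![1, -u] j : K) * (chi y (![c, 0] j) : K) = 0} := by
    ext
    simp [chi_zero, ← sub_eq_add_neg, sub_eq_zero, Units.ext_iff]
  rw [this]
  refine isClosedOver_laurent Finset.univ (fun j _ => ?_) _
  fin_cases j
  exacts [one_mem E, neg_mem hu]

lemma isClosed_chi_eq (c : ι → ℤ) (u : Kˣ) : IsClosed {y : ι → Kˣ | chi y c = u} :=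
  (isClosedOver_chi_eq ⊤ (Subfield.mem_top _) c).isClosed

variable {μ : Type} [DecidableEq κ] [DecidableEq μ]

/-- The homomorphism of tori dual to a homomorphism of character lattices. -/
def torusMap (φ : (κ → ℤ) →ₗ[ℤ] (ι → ℤ)) (y : ι → Kˣ) : κ → Kˣ :=
  fun j => chi y (φ (Pi.single j 1))

lemma chiHom_torusMap [Fintype κ] (φ : (κ → ℤ) →ₗ[ℤ] (ι → ℤ)) (y : ι → Kˣ) :
    chiHom (torusMap φ y) = chiHom y ∘ₗ φ :=
  LinearMap.pi_ext' fun j => LinearMap.ext_ring (chi_single (torusMap φ y) j)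

lemma chi_torusMap [Fintype κ] (φ : (κ → ℤ) →ₗ[ℤ] (ι → ℤ)) (y : ι → Kˣ) (c : κ → ℤ) :
    chi (torusMap φ y) c = chi y (φ c) :=
  DFunLike.congr_fun (chiHom_torusMap φ y) c

lemma torusMap_torusMap [Fintype κ] (φ : (μ → ℤ) →ₗ[ℤ] (κ → ℤ))
    (ψ : (κ → ℤ) →ₗ[ℤ] (ι → ℤ)) (y : ι → Kˣ) :
    torusMap φ (torusMap ψ y) = torusMap (ψ ∘ₗ φ) y :=
  funext fun _ => chi_torusMap ψ y _

lemma torusMap_id [DecidableEq ι] (y : ι → Kˣ) : torusMap LinearMap.id y = y :=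
  funext fun i => chi_single y i

lemma continuous_torusMap [Finite κ] (φ : (κ → ℤ) →ₗ[ℤ] (ι → ℤ)) :
    Continuous (torusMap φ : (ι → Kˣ) → κ → Kˣ) := by
  have := Fintype.ofFinite κ
  refine continuous_of_isClosed_eval_eq_zero fun p => ?_
  have (y : ι → Kˣ) : eval (fun j => (torusMap φ y j : K)) p =
      ∑ m ∈ p.support, coeff m p * (chi y (φ fun j => (m j : ℤ)) : K) := by
    rw [eval_eq']
    refine Finset.sum_congr rfl fun m _ => ?_
    rw [← chi_torusMap, chi, Units.coe_prod]
    simp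
  simp only [this]
  exact (isClosedOver_laurent (E := (⊤ : Subfield K)) _ (fun _ _ => Subfield.mem_top _) _).isClosed

end Characters

/-! ### The subgroup of the torus attached to a lattice of characters -/

section LatTorus

variable {K : Type} [Field K] {ι κ : Type}

lemma vdim_range_of_isEmbedding [Finite ι] [Finite κ] {f : (κ → Kˣ) → ι → Kˣ}
    (hf : Topology.IsEmbedding f) (hcl : IsClosed (Set.range f)) :
    vdim K (Set.range f) = vdim K (Set.univ : Set (κ → Kˣ)) := by
  apply le_antisymm
  · exact vdim_le_of_isInducing hcl isClosed_univ (Set.range_nonempty f)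
      ((Homeomorph.Set.univ _).symm.isInducing.comp hf.toHomeomorph.symm.isInducing)
  · exact vdim_le_of_isInducing isClosed_univ hcl Set.univ_nonempty
      (hf.toHomeomorph.isInducing.comp (Homeomorph.Set.univ _).isInducing)

lemma exists_surjective_ker_eq [Finite ι] (L : Submodule ℤ (ι → ℤ))
    [Module.IsTorsionFree ℤ ((ι → ℤ) ⧸ L)] :
    ∃ φ : (ι → ℤ) →ₗ[ℤ] (Fin (Module.finrank ℤ ((ι → ℤ) ⧸ L)) → ℤ),
      Function.Surjective φ ∧ LinearMap.ker φ = L := by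
  have : Module.Free ℤ ((ι → ℤ) ⧸ L) := Module.free_of_finite_type_torsion_free'
  let B := Module.finBasis ℤ ((ι → ℤ) ⧸ L)
  exact ⟨B.equivFun.toLinearMap ∘ₗ L.mkQ, B.equivFun.surjective.comp L.mkQ_surjective,
    by rw [LinearEquiv.ker_comp, Submodule.ker_mkQ]⟩

variable [Fintype ι]

variable (K) in
/-- The algebraic subgroup on which all the characters of a lattice are trivial. -/
def latTorus (L : Submodule ℤ (ι → ℤ)) : Set (ι → Kˣ) := {y | ∀ c ∈ L, chi y c = 1}

lemma latTorus_antitone : Antitone (latTorus K : Submodule ℤ (ι → ℤ) → Set (ι → Kˣ)) :=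
  fun _ _ h _ hy c hc => hy c (h hc)

lemma one_mem_latTorus (L : Submodule ℤ (ι → ℤ)) : 1 ∈ latTorus K L :=
  fun c _ => by simp [chi]

lemma isClosed_latTorus (L : Submodule ℤ (ι → ℤ)) : IsClosed (latTorus K L) := by
  have : latTorus K L = ⋂ c ∈ L, {y | chi y c = 1} := by ext; simp [latTorus]
  rw [this]
  exact isClosed_biInter fun c _ => isClosed_chi_eq c 1

lemma latTorus_span_range {k : ℕ} (M : Matrix (Fin k) ι ℤ) :
    latTorus K (Submodule.span ℤ (Set.range M)) = {y | mpow K M y = 1} := by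
  ext y
  refine ⟨fun hy => funext fun j => hy (M j) (Submodule.subset_span ⟨j, rfl⟩), fun hy c hc => ?_⟩
  have : Submodule.span ℤ (Set.range M) ≤ LinearMap.ker (chiHom y) := by
    rw [Submodule.span_le]
    rintro _ ⟨j, rfl⟩
    exact congrFun hy j
  exact this hc

lemma isAlgSubgroup_latTorus (L : Submodule ℤ (ι → ℤ)) : IsAlgSubgroup K (latTorus K L) := by
  obtain ⟨k, M, rfl⟩ := Submodule.fg_iff_exists_fin_generating_family.mp (IsNoetherian.noetherian L)
  exact ⟨k, M, latTorus_span_range M⟩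

section Surjective

variable {φ : (ι → ℤ) →ₗ[ℤ] (κ → ℤ)} {σ : (κ → ℤ) →ₗ[ℤ] (ι → ℤ)}

lemma torusMap_mem_latTorus_ker [Fintype κ] [DecidableEq ι] (φ : (ι → ℤ) →ₗ[ℤ] (κ → ℤ))
    (z : κ → Kˣ) : torusMap φ z ∈ latTorus K (LinearMap.ker φ) :=
  fun c hc => by rw [chi_torusMap, hc, chi_zero]

lemma torusMap_leftInverse [Fintype κ] [DecidableEq ι] [DecidableEq κ]
    (hσ : φ ∘ₗ σ = LinearMap.id) :
    Function.LeftInverse (torusMap σ) (torusMap φ : (κ → Kˣ) → ι → Kˣ) :=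
  fun z => by rw [torusMap_torusMap, hσ, torusMap_id]

lemma torusMap_torusMap_of_mem_latTorus [Fintype κ] [DecidableEq ι] [DecidableEq κ]
    (hσ : φ ∘ₗ σ = LinearMap.id) {y : ι → Kˣ} (hy : y ∈ latTorus K (LinearMap.ker φ)) :
    torusMap φ (torusMap σ y) = y := by
  refine funext fun i => ?_
  have hker : σ (φ (Pi.single i 1)) - Pi.single i 1 ∈ LinearMap.ker φ := by
    rw [LinearMap.mem_ker, map_sub, ← LinearMap.comp_apply φ, hσ, LinearMap.id_apply, sub_self]
  calc torusMap φ (torusMap σ y) i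
    _ = chi y (σ (φ (Pi.single i 1))) := chi_torusMap σ y _
    _ = chi y (σ (φ (Pi.single i 1)) - Pi.single i 1) * chi y (Pi.single i 1) := by
      rw [← chi_add, sub_add_cancel]
    _ = y i := by rw [hy _ hker, one_mul, chi_single]

lemma range_torusMap [Fintype κ] [DecidableEq ι] (hφ : Function.Surjective φ) :
    Set.range (torusMap φ : (κ → Kˣ) → ι → Kˣ) = latTorus K (LinearMap.ker φ) := by
  classical
  obtain ⟨σ, hσ⟩ := Module.projective_lifting_property φ LinearMap.id hφ
  refine subset_antisymm ?_ fun y hy => ⟨_, torusMap_torusMap_of_mem_latTorus hσ hy⟩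
  rintro _ ⟨z, rfl⟩
  exact torusMap_mem_latTorus_ker φ z

variable [IsAlgClosed K]

lemma isIrredVar_latTorus_ker [Finite κ] (hφ : Function.Surjective φ) :
    IsIrredVar K (latTorus K (LinearMap.ker φ)) := by
  classical
  have := Fintype.ofFinite κ
  refine isIrredVar_iff.mpr ⟨isClosed_latTorus _, ?_⟩
  rw [← range_torusMap hφ, ← Set.image_univ]
  exact isIrreducible_univ.image _ (continuous_torusMap φ).continuousOn

lemma vdim_latTorus_ker [Fintype κ] (hφ : Function.Surjective φ) :
    vdim K (latTorus K (LinearMap.ker φ)) = Fintype.card κ := by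
  classical
  obtain ⟨σ, hσ⟩ := Module.projective_lifting_property φ LinearMap.id hφ
  have hemb := (torusMap_leftInverse (K := K) hσ).isEmbedding (continuous_torusMap σ)
    (continuous_torusMap φ)
  have hrange := range_torusMap (K := K) hφ
  rw [← hrange, vdim_range_of_isEmbedding hemb
    (hrange ▸ isClosed_latTorus _), vdim_univ]

end Surjective

variable [IsAlgClosed K] (L : Submodule ℤ (ι → ℤ))

lemma isSubtorus_latTorus [Module.IsTorsionFree ℤ ((ι → ℤ) ⧸ L)] :
    IsSubtorus K (latTorus K L) := by
  classical
  obtain ⟨φ, hφ, hker⟩ := exists_surjective_ker_eq L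
  exact ⟨isAlgSubgroup_latTorus L, hker ▸ isIrredVar_latTorus_ker hφ⟩

lemma vdim_latTorus [Module.IsTorsionFree ℤ ((ι → ℤ) ⧸ L)] :
    vdim K (latTorus K L) = Module.finrank ℤ ((ι → ℤ) ⧸ L) := by
  classical
  obtain ⟨φ, hφ, hker⟩ := exists_surjective_ker_eq L
  rw [← hker, vdim_latTorus_ker hφ, Fintype.card_fin, hker]

/-- The saturation of `L` has the same rank as `L`. -/
lemma finrank_quotient_le_vdim_latTorus :
    Module.finrank ℤ ((ι → ℤ) ⧸ L) ≤ vdim K (latTorus K L) := by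
  let ψ := (Submodule.torsion ℤ ((ι → ℤ) ⧸ L)).mkQ ∘ₗ L.mkQ
  have hψ : Function.Surjective ψ := (Submodule.mkQ_surjective _).comp L.mkQ_surjective
  let e := ψ.quotKerEquivOfSurjective hψ
  have : Module.IsTorsionFree ℤ ((ι → ℤ) ⧸ LinearMap.ker ψ) :=
    e.injective.moduleIsTorsionFree e (by simp)
  have hle : L ≤ LinearMap.ker ψ := fun c hc => by
    rw [LinearMap.mem_ker, LinearMap.comp_apply, Submodule.mkQ_apply L,
      (Submodule.Quotient.mk_eq_zero L).mpr hc, map_zero]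
  calc Module.finrank ℤ ((ι → ℤ) ⧸ L)
    _ = Module.finrank ℤ ((ι → ℤ) ⧸ LinearMap.ker ψ) := by
      rw [e.finrank_eq, finrank_quotient_eq_of_le_torsion le_rfl]
    _ = vdim K (latTorus K (LinearMap.ker ψ)) := (vdim_latTorus _).symm
    _ ≤ vdim K (latTorus K L) := vdim_mono (isClosed_latTorus _) (isClosed_latTorus _)
      ⟨1, one_mem_latTorus _⟩ (latTorus_antitone hle)

lemma card_le_vdim_add {k : ℕ} (M : Matrix (Fin k) ι ℤ) :
    Fintype.card ι ≤ vdim K {y | mpow K M y = 1} + k := by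
  have hquot := finrank_quotient_le_vdim_latTorus (K := K) (Submodule.span ℤ (Set.range M))
  have hrank := finrank_range_le_card (R := ℤ) M
  have hadd := Submodule.finrank_quotient_add_finrank (Submodule.span ℤ (Set.range M))
  rw [latTorus_span_range] at hquot
  rw [Module.finrank_fintype_fun_eq_card] at hadd
  rw [Fintype.card_fin, Set.finrank] at hrank
  lia

end LatTorus

/-! ### Minimal tori and codimension -/

section MinTorus

variable {K : Type} [Field K] {ι : Type}

lemma isTorsionFree_quotient_of_nsmul {A : Type} [AddCommGroup A] {L : Submodule ℤ A}
    (h : ∀ (m : ℕ) (c : A), m ≠ 0 → m • c ∈ L → c ∈ L) : Module.IsTorsionFree ℤ (A ⧸ L) := by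
  refine .of_smul_eq_zero fun m x hmx => or_iff_not_imp_left.mpr fun hm => ?_
  obtain ⟨c, rfl⟩ := L.mkQ_surjective x
  rw [← map_smul, Submodule.mkQ_apply, Submodule.Quotient.mk_eq_zero] at hmx
  rw [Submodule.mkQ_apply, Submodule.Quotient.mk_eq_zero]
  refine h m.natAbs c (Int.natAbs_ne_zero.mpr hm) ?_
  rw [← natCast_zsmul]
  rcases abs_choice m with hm | hm <;> simpa [Int.natCast_natAbs, hm] using hmx

lemma finite_setOf_pow_eq_one {m : ℕ} (hm : m ≠ 0) : {u : Kˣ | u ^ m = 1}.Finite := by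
  have : NeZero m := ⟨hm⟩
  exact Set.finite_coe_iff.mp (inferInstanceAs (Finite (rootsOfUnity m K)))

lemma mem_coset_iff {b y : ι → Kˣ} {T : Set (ι → Kˣ)} : y ∈ coset K b T ↔ b⁻¹ * y ∈ T := by
  rw [coset, Set.image_mul_left, Set.mem_preimage]

variable [Fintype ι]

/-- The lattice of characters which are constant on `S`. -/
def constLat (S : Set (ι → Kˣ)) : Submodule ℤ (ι → ℤ) :=
  ⨅ x ∈ S, ⨅ y ∈ S, LinearMap.eqLocus (chiHom x) (chiHom y)

lemma mem_constLat {S : Set (ι → Kˣ)} {c : ι → ℤ} :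
    c ∈ constLat S ↔ ∀ x ∈ S, ∀ y ∈ S, chi x c = chi y c := by
  simp only [constLat, Submodule.mem_iInf, LinearMap.mem_eqLocus]
  rfl

/-- A character of `S` with constant `m`-th power takes finitely many values, hence is constant. -/
lemma mem_constLat_of_nsmul_mem {S : Set (ι → Kˣ)} (hS : IsIrredVar K S) {m : ℕ} (hm : m ≠ 0)
    {c : ι → ℤ} (hc : m • c ∈ constLat S) : c ∈ constLat S := by
  obtain ⟨x₀, hx₀⟩ := hS.2.1
  have hfin : ((fun u => {y | chi y c = chi x₀ c * u}) '' {u : Kˣ | u ^ m = 1}).Finite :=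
    (finite_setOf_pow_eq_one hm).image _
  obtain ⟨Z, hZ, hSZ⟩ := isIrreducible_iff_sUnion_isClosed.mp (isIrredVar_iff.mp hS).2
    hfin.toFinset (by
      intro Z hZ
      obtain ⟨u, -, rfl⟩ := hfin.mem_toFinset.mp hZ
      exact isClosed_chi_eq c _) (by
      intro y hy
      rw [hfin.coe_toFinset]
      refine ⟨_, ⟨(chi x₀ c)⁻¹ * chi y c, ?_, rfl⟩, (mul_inv_cancel_left _ _).symm⟩
      rw [Set.mem_ofPred_eq, mul_pow, inv_pow, ← chi_nsmul, ← chi_nsmul,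
        mem_constLat.mp hc y hy x₀ hx₀, inv_mul_cancel])
  obtain ⟨u, -, rfl⟩ := hfin.mem_toFinset.mp hZ
  exact mem_constLat.mpr fun x hx y hy => (hSZ hx).trans (hSZ hy).symm

lemma isTorsionFree_quotient_constLat {S : Set (ι → Kˣ)} (hS : IsIrredVar K S) :
    Module.IsTorsionFree ℤ ((ι → ℤ) ⧸ constLat S) :=
  isTorsionFree_quotient_of_nsmul fun _ _ hm => mem_constLat_of_nsmul_mem hS hm

lemma mem_coset_latTorus_iff {b y : ι → Kˣ} {L : Submodule ℤ (ι → ℤ)} :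
    y ∈ coset K b (latTorus K L) ↔ ∀ c ∈ L, chi y c = chi b c := by
  rw [mem_coset_iff]
  refine forall₂_congr fun c _ => ?_
  rw [← mul_right_inj (chi b c), ← chi_mul, mul_inv_cancel_left, mul_one]

lemma subset_coset_constLat {S : Set (ι → Kˣ)} {b : ι → Kˣ} (hb : b ∈ S) :
    S ⊆ coset K b (latTorus K (constLat S)) := fun y hy =>
  mem_coset_latTorus_iff.mpr fun _ hc => mem_constLat.mp hc y hy b hb

variable [IsAlgClosed K]

lemma isMinTorus_constLat {S : Set (ι → Kˣ)} (hS : IsIrredVar K S) :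
    IsMinTorus K S (latTorus K (constLat S)) := by
  have := isTorsionFree_quotient_constLat hS
  obtain ⟨b, hb⟩ := hS.2.1
  refine ⟨isSubtorus_latTorus _, ⟨b, subset_coset_constLat hb⟩, ?_⟩
  rintro T' ⟨⟨k, N, rfl⟩, -⟩ ⟨a, ha⟩
  rw [← latTorus_span_range] at ha ⊢
  refine latTorus_antitone fun c hc => mem_constLat.mpr fun x hx y hy => ?_
  rw [mem_coset_latTorus_iff.mp (ha hx) c hc, mem_coset_latTorus_iff.mp (ha hy) c hc]

end MinTorus

section Codim

variable {K : Type} [Field K] {ι : Type} [Fintype ι] {V T : Set (ι → Kˣ)}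

lemma cd_le_of_subset_coset {a : ι → Kˣ} (hT : IsSubtorus K T) (h : V ⊆ coset K a T) :
    cd K V ≤ vdim K T - vdim K V := by
  refine Nat.sub_le_sub_right (Nat.sInf_le ?_) _
  exact ⟨T, a, hT, h, rfl⟩

lemma IsSubtorus.isClosed (hT : IsSubtorus K T) : IsClosed T := (isIrredVar_iff.mp hT.2).1

lemma vdim_minTorus_le (hT : IsMinTorus K V T) : vdim K T ≤ cd K V + vdim K V := by
  obtain ⟨hsub, ⟨a, ha⟩, hmin⟩ := hT
  have hne : {d | ∃ T c, IsSubtorus K T ∧ V ⊆ coset K c T ∧ d = vdim K T}.Nonempty :=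
    ⟨_, T, a, hsub, ha, rfl⟩
  obtain ⟨T', a', hT', ha', hdim⟩ := Nat.sInf_mem hne
  have : vdim K T ≤ vdim K T' :=
    vdim_mono hsub.isClosed hT'.isClosed hsub.2.2.1 (hmin T' hT' ⟨a', ha'⟩)
  rw [cd, hdim]
  lia

/-- Take `S` of largest dimension among the irreducible varieties between `V` and `W` whose
codimension does not exceed that of `V`. -/
lemma exists_cdMaximal_superset {W : Set (ι → Kˣ)} (hV : IsIrredVar K V) (h : V ⊆ W) :
    ∃ S, CdMaximal K S W ∧ V ⊆ S ∧ cd K S ≤ cd K V := by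
  obtain ⟨S, ⟨hS, hVS, hSW, hcd⟩, hmax⟩ :=
    (measure fun S : Set (ι → Kˣ) => Nat.card ι - vdim K S).wf.has_min
      {S | IsIrredVar K S ∧ V ⊆ S ∧ S ⊆ W ∧ cd K S ≤ cd K V} ⟨V, hV, subset_rfl, h, le_rfl⟩
  refine ⟨S, ⟨hS, hSW, fun S' hS' hSS' hS'W => ?_⟩, hVS, hcd⟩
  by_contra! hle
  refine hmax S' ⟨hS', hVS.trans hSS'.subset, hS'W, hle.trans hcd⟩ ?_
  have hlt := vdim_lt_vdim hS hS' hSS'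
  have hcard := vdim_le_card (isIrredVar_iff.mp hS').1 hS'.2.1
  exact Nat.sub_lt_sub_left (hlt.trans_le hcard) hlt

end Codim

/-! ### Multiplicative rank and transcendence degree -/

section Rank

variable {K : Type} [Field K] {n : ℕ}

lemma mem_divHull_empty {u : Kˣ} : u ∈ divHull K ∅ ↔ IsOfFinOrder u := by
  rw [isOfFinOrder_iff_pow_eq_one]
  simp only [← Subgroup.mem_bot, ← Subgroup.closure_empty, Nat.pos_iff_ne_zero]
  rfl

lemma mem_relLattice_empty {b : Fin n → Kˣ} {c : Fin n → ℤ} :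
    c ∈ relLattice K ∅ b ↔ IsOfFinOrder (chi b c) := mem_divHull_empty

lemma isTorsionFree_quotient_relLattice (b : Fin n → Kˣ) :
    Module.IsTorsionFree ℤ ((Fin n → ℤ) ⧸ relLattice K ∅ b) :=
  isTorsionFree_quotient_of_nsmul fun m c hm hc => by
    rw [mem_relLattice_empty, chi_nsmul] at hc
    exact mem_relLattice_empty.mpr (hc.of_pow hm)

lemma ldim_eq_finrank_quotient (b : Fin n → Kˣ) :
    ldim K b = Module.finrank ℤ ((Fin n → ℤ) ⧸ relLattice K ∅ b) := by
  have hadd := Submodule.finrank_quotient_add_finrank (relLattice K ∅ b)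
  rw [Module.finrank_fin_fun] at hadd
  exact Nat.sub_eq_of_eq_add hadd.symm

lemma isOfFinOrder_of_ldim_eq_zero {b : Fin n → Kˣ} (h : ldim K b = 0) (i : Fin n) :
    IsOfFinOrder (b i) := by
  have := isTorsionFree_quotient_relLattice b
  rw [ldim_eq_finrank_quotient, Module.finrank_eq_zero_iff_of_free,
    Submodule.Quotient.subsingleton_iff] at h
  rw [← chi_single b i, ← mem_relLattice_empty, h]
  trivial

lemma exists_algebraicIndependent_card_eq_trdegQ {s : Set K} (hs : s.Finite) :
    ∃ t : Finset K, ↑t ⊆ s ∧ t.card = trdegQ K s ∧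
      AlgebraicIndependent (⊥ : Subfield K) (fun x : {y : K // y ∈ t} => (x : K)) := by
  refine Nat.sSup_mem (s := {d | ∃ t : Finset K, ↑t ⊆ s ∧ t.card = d ∧
    AlgebraicIndependent (⊥ : Subfield K) (fun x : {y : K // y ∈ t} => (x : K))}) ?_ ?_
  · exact ⟨0, ∅, by simp, rfl, algebraicIndependent_empty_type⟩
  · refine ⟨hs.toFinset.card, ?_⟩
    rintro _ ⟨t, ht, rfl, -⟩
    exact Finset.card_le_card (hs.subset_toFinset.mpr ht)

lemma trdegQ_eq_zero {s : Set K} (hs : s.Finite) (halg : ∀ x ∈ s, IsAlgebraic (⊥ : Subfield K) x) :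
    trdegQ K s = 0 := by
  obtain ⟨t, hts, hcard, hind⟩ := exists_algebraicIndependent_card_eq_trdegQ hs
  rw [← hcard, Finset.card_eq_zero, Finset.eq_empty_iff_forall_notMem]
  exact fun x hx => hind.transcendental ⟨x, hx⟩ (halg x (hts hx))

lemma isOfFinOrder_of_isAlgebraic {y : Fin n → Kˣ}
    (hdelta : (ldim K y : ℤ) ≤ 2 * trdegQ K (Set.range fun i => (y i : K)))
    (halg : ∀ i, IsAlgebraic (⊥ : Subfield K) (y i : K)) (i : Fin n) : IsOfFinOrder (y i) := by
  rw [trdegQ_eq_zero (Set.finite_range _) (Set.forall_mem_range.mpr halg)] at hdelta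
  exact isOfFinOrder_of_ldim_eq_zero (by lia) i

end Rank

/-! ### The locus of a point over an algebraically closed subfield -/

section Locus

lemma exists_eq_sum_C_mul_map {k K σ τ : Type} [Field k] [Field K] [Algebra k K]
    (B : Module.Basis τ k K) (f : MvPolynomial σ K) :
    ∃ g : τ →₀ MvPolynomial σ k, f = g.sum fun e p => C (B e) * map (algebraMap k K) p := by
  obtain ⟨g, hg⟩ := TensorProduct.eq_repr_basis_left B
    ((algebraTensorAlgEquiv (σ := σ) k K).symm f)
  refine ⟨g, ?_⟩
  rw [← AlgEquiv.apply_symm_apply (algebraTensorAlgEquiv k K) f, ← hg, map_finsuppSum]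
  refine Finsupp.sum_congr fun e _ => ?_
  rw [algebraTensorAlgEquiv_tmul, smul_eq_C_mul]

variable {K : Type} [Field K] {E : Subfield K} {ι : Type}

/-- The inclusion of the `E`-rational points of the torus. -/
def basePt (x : ι → Eˣ) : ι → Kˣ := fun i => Units.map E.subtype.toMonoidHom (x i)

lemma eval_basePt_map (x : ι → Eˣ) (p : MvPolynomial ι E) :
    eval (fun i => (basePt x i : K)) (map (algebraMap E K) p) = eval (fun i => (x i : E)) p := by
  rw [eval_map]
  exact (eval₂_comp (algebraMap E K) (fun i => (x i : E)) p).symm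

lemma eval_basePt_eq_zero_iff {τ : Type} (B : Module.Basis τ E K) (x : ι → Eˣ)
    (g : τ →₀ MvPolynomial ι E) :
    eval (fun i => (basePt x i : K)) (g.sum fun e p => C (B e) * map (algebraMap E K) p) = 0 ↔
      ∀ e, eval (fun i => (x i : E)) (g e) = 0 := by
  have hsum : eval (fun i => (basePt x i : K))
      (g.sum fun e p => C (B e) * map (algebraMap E K) p) =
        ∑ e ∈ g.support, eval (fun i => (x i : E)) (g e) • B e := by
    rw [Finsupp.sum, map_sum]
    refine Finset.sum_congr rfl fun e _ => ?_
    rw [map_mul, eval_C, eval_basePt_map, Subfield.smul_def, smul_eq_mul, mul_comm]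
  rw [hsum]
  constructor
  · intro h e
    by_cases he : e ∈ g.support
    · exact linearIndependent_iff'.mp B.linearIndependent _ _ h e he
    · rw [Finsupp.notMem_support_iff.mp he, map_zero]
  · intro h
    exact Finset.sum_eq_zero fun e _ => by rw [h e, zero_smul]

lemma continuous_basePt : Continuous (basePt : (ι → Eˣ) → ι → Kˣ) := by
  refine continuous_of_isClosed_eval_eq_zero fun p => ?_
  obtain ⟨g, rfl⟩ := exists_eq_sum_C_mul_map (Module.Basis.ofVectorSpace E K) p
  simp only [eval_basePt_eq_zero_iff, Set.ofPred_forall]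
  exact isClosed_iInter fun e => isClosed_eval_eq_zero _

lemma basePt_mem_zeroSet_map {S : Set (MvPolynomial ι E)} {x : ι → Eˣ} :
    basePt x ∈ zeroSet K (map (algebraMap E K) '' S) ↔ x ∈ zeroSet E S := by
  simp only [zeroSet, Set.mem_ofPred_eq, Set.forall_mem_image, eval_basePt_map]
  exact forall₂_congr fun p _ => ZeroMemClass.coe_eq_zero

lemma isInducing_basePt : Topology.IsInducing (basePt : (ι → Eˣ) → ι → Kˣ) := by
  refine ⟨TopologicalSpace.ext_iff_isClosed.mpr fun {C} => ⟨fun hC => ?_, fun hC => ?_⟩⟩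
  · obtain ⟨S, rfl⟩ := isClosed_iff_isZClosed.mp hC
    exact isClosed_induced_iff.mpr
      ⟨_, isClosed_zeroSet (map (algebraMap E K) '' S), Set.ext fun x => basePt_mem_zeroSet_map⟩
  · obtain ⟨C', hC', rfl⟩ := isClosed_induced_iff.mp hC
    exact hC'.preimage continuous_basePt

lemma closure_image_basePt {I : Ideal (MvPolynomial ι E)}
    (hI : torusIdeal (zeroSet E (I : Set (MvPolynomial ι E))) = I) :
    closure (basePt '' zeroSet E (I : Set (MvPolynomial ι E))) =
      zeroSet K (map (algebraMap E K) '' (I : Set (MvPolynomial ι E))) := by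
  refine subset_antisymm (closure_minimal ?_ (isClosed_zeroSet _)) fun y hy => ?_
  · rintro _ ⟨x, hx, rfl⟩
    exact basePt_mem_zeroSet_map.mpr hx
  · rw [← zeroSet_torusIdeal isClosed_closure]
    intro f hf
    obtain ⟨g, rfl⟩ := exists_eq_sum_C_mul_map (Module.Basis.ofVectorSpace E K) f
    have hg (e) : g e ∈ I := by
      rw [← hI, mem_torusIdeal]
      exact fun x hx => (eval_basePt_eq_zero_iff _ x g).mp
        (mem_torusIdeal.mp hf _ (subset_closure ⟨x, hx, rfl⟩)) e
    rw [Finsupp.sum, map_sum]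
    exact Finset.sum_eq_zero fun e _ => by rw [map_mul, hy _ ⟨g e, hg e, rfl⟩, mul_zero]

lemma isClosedOver_iff {V : Set (ι → Kˣ)} : IsClosedOver K (E : Set K) V ↔
    ∃ S : Set (MvPolynomial ι E), V = zeroSet K (map (algebraMap E K) '' S) := by
  constructor
  · rintro ⟨S, hS, rfl⟩
    refine ⟨map (algebraMap E K) ⁻¹' S, ?_⟩
    rw [Set.image_preimage_eq_of_subset]
    intro p hp
    rw [mem_range_map_iff_coeffs_subset]
    intro a ha
    obtain ⟨m, -, rfl⟩ := mem_coeffs_iff.mp ha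
    exact ⟨⟨_, hS p hp m⟩, rfl⟩
  · rintro ⟨S, rfl⟩
    refine ⟨_, ?_, rfl⟩
    rintro _ ⟨p, -, rfl⟩ m
    rw [coeff_map]
    exact (coeff m p).2

/-- The prime ideal of the polynomials over `E` that vanish at `b`. -/
noncomputable def pointIdeal (E : Subfield K) (b : ι → Kˣ) : Ideal (MvPolynomial ι E) :=
  RingHom.ker (aeval (R := E) fun i => (b i : K))

lemma mem_pointIdeal {b : ι → Kˣ} {p : MvPolynomial ι E} :
    p ∈ pointIdeal E b ↔ eval (fun i => (b i : K)) (map (algebraMap E K) p) = 0 := by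
  rw [pointIdeal, RingHom.mem_ker, aeval_def, eval_map]

instance (b : ι → Kˣ) : (pointIdeal E b).IsPrime := RingHom.ker_isPrime _

lemma prod_X_notMem_pointIdeal [Fintype ι] (b : ι → Kˣ) : ∏ i, X i ∉ pointIdeal E b := by
  rw [mem_pointIdeal, map_prod, map_prod]
  simp only [map_X, eval_X]
  exact Finset.prod_ne_zero_iff.mpr fun i _ => (b i).ne_zero

lemma locusOver_eq_zeroSet (b : ι → Kˣ) : locusOver K (E : Set K) b =
    zeroSet K (map (algebraMap E K) '' (pointIdeal E b : Set (MvPolynomial ι E))) := by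
  refine subset_antisymm (Set.sInter_subset_of_mem ⟨isClosedOver_iff.mpr ⟨_, rfl⟩, ?_⟩)
    (Set.subset_sInter ?_)
  · rintro _ ⟨p, hp, rfl⟩
    exact mem_pointIdeal.mp hp
  · rintro _ ⟨hC, hb⟩ y hy
    obtain ⟨S, rfl⟩ := isClosedOver_iff.mp hC
    rintro _ ⟨p, hp, rfl⟩
    exact hy _ ⟨p, mem_pointIdeal.mpr (hb _ ⟨p, hp, rfl⟩), rfl⟩

lemma mem_locusOver (b : ι → Kˣ) : b ∈ locusOver K (E : Set K) b :=
  Set.mem_sInter.mpr fun _ hC => hC.2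

lemma locusOver_subset {E : Set K} {b : ι → Kˣ} {V : Set (ι → Kˣ)} (hV : IsClosedOver K E V)
    (hb : b ∈ V) : locusOver K E b ⊆ V :=
  Set.sInter_subset_of_mem ⟨hV, hb⟩

variable [Finite ι] [IsAlgClosed E]

lemma torusIdeal_zeroSet_pointIdeal (b : ι → Kˣ) :
    torusIdeal (zeroSet E (pointIdeal E b : Set (MvPolynomial ι E))) = pointIdeal E b := by
  have := Fintype.ofFinite ι
  exact torusIdeal_zeroSet _ (prod_X_notMem_pointIdeal b)

lemma isIrredVar_zeroSet_pointIdeal (b : ι → Kˣ) :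
    IsIrredVar E (zeroSet E (pointIdeal E b : Set (MvPolynomial ι E))) := by
  have := Fintype.ofFinite ι
  exact isIrredVar_iff.mpr
    ⟨isClosed_zeroSet _, isIrreducible_zeroSet _ (prod_X_notMem_pointIdeal b)⟩

lemma locusOver_eq_closure (b : ι → Kˣ) : locusOver K (E : Set K) b =
    closure (basePt '' zeroSet E (pointIdeal E b : Set (MvPolynomial ι E))) := by
  rw [locusOver_eq_zeroSet, closure_image_basePt (torusIdeal_zeroSet_pointIdeal b)]

lemma isIrredVar_locusOver (b : ι → Kˣ) : IsIrredVar K (locusOver K (E : Set K) b) := by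
  rw [locusOver_eq_closure, isIrredVar_iff]
  exact ⟨isClosed_closure, ((isIrredVar_iff.mp (isIrredVar_zeroSet_pointIdeal b)).2.image _
    continuous_basePt.continuousOn).closure⟩

lemma exists_mem_locusOver_forall_mem (b : ι → Kˣ) :
    ∃ x ∈ locusOver K (E : Set K) b, ∀ i, (x i : K) ∈ E := by
  obtain ⟨x, hx⟩ := (isIrredVar_zeroSet_pointIdeal (E := E) b).2.1
  refine ⟨basePt x, ?_, fun i => (x i : E).2⟩
  rw [locusOver_eq_closure]
  exact subset_closure ⟨x, hx, rfl⟩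

lemma card_le_vdim_locusOver {τ : Type} [Fintype τ] {b : ι → Kˣ} {j : τ → ι}
    (h : AlgebraicIndependent E fun t => (b (j t) : K)) :
    Fintype.card τ ≤ vdim K (locusOver K (E : Set K) b) := by
  set Z := zeroSet E (pointIdeal E b : Set (MvPolynomial ι E))
  have hZ : IsIrredVar E Z := isIrredVar_zeroSet_pointIdeal b
  have hmaps (x : Z) : basePt (x : ι → Eˣ) ∈ locusOver K (E : Set K) b := by
    rw [locusOver_eq_closure]
    exact subset_closure ⟨x, x.2, rfl⟩
  calc Fintype.card τ ≤ vdim E Z := card_le_vdim hZ j fun p hp => by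
        rw [torusIdeal_zeroSet_pointIdeal, pointIdeal, RingHom.mem_ker, aeval_rename] at hp
        exact h.eq_zero_of_aeval_eq_zero p hp
    _ ≤ vdim K (locusOver K (E : Set K) b) :=
        vdim_le_of_isInducing (isIrredVar_iff.mp hZ).1
          (isIrredVar_iff.mp (isIrredVar_locusOver b)).1 hZ.2.1
          ((isInducing_basePt.comp .subtypeVal).codRestrict hmaps)

end Locus

/-! ### Green points -/

section GreenPoints

variable {K : Type} [Field K]

/-- The algebraic closure of the prime field in `K`. -/
def algConst (K : Type) [Field K] : Subfield K :=
  (algebraicClosure (⊥ : Subfield K) K).toSubfield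

lemma mem_algConst {x : K} : x ∈ algConst K ↔ IsAlgebraic (⊥ : Subfield K) x :=
  mem_algebraicClosure_iff

lemma coe_mem_algConst_of_isOfFinOrder {u : Kˣ} (hu : IsOfFinOrder u) : (u : K) ∈ algConst K := by
  obtain ⟨m, hm, hum⟩ := isOfFinOrder_iff_pow_eq_one.mp hu
  refine mem_algConst.mpr (IsAlgebraic.of_pow hm ?_)
  rw [← Units.val_pow_eq_pow_val, hum, Units.val_one]
  exact isAlgebraic_one

lemma locusOver_subset_coset_latTorus {n : ℕ} (b : Fin n → Kˣ) :
    locusOver K (algConst K : Set K) b ⊆ coset K b (latTorus K (relLattice K ∅ b)) :=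
  fun _ hy => mem_coset_latTorus_iff.mpr fun c hc => locusOver_subset
    (isClosedOver_chi_eq _ (coe_mem_algConst_of_isOfFinOrder (mem_relLattice_empty.mp hc)) c) rfl hy

lemma mem_coset_mpow_eq_one_iff {ι : Type} [Fintype ι] {k : ℕ} {M : Matrix (Fin k) ι ℤ}
    {b y : ι → Kˣ} : y ∈ coset K b {y | mpow K M y = 1} ↔ mpow K M y = mpow K M b := by
  rw [mem_coset_iff, Set.mem_ofPred_eq, ← mul_right_inj (mpow K M b), mul_one]
  have hmul : mpow K M b * mpow K M (b⁻¹ * y) = mpow K M (b * (b⁻¹ * y)) :=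
    funext fun j => (chi_mul b _ (M j)).symm
  rw [hmul, mul_inv_cancel_left]

lemma isClosed_coset_mpow_eq_one {ι : Type} [Fintype ι] {k : ℕ} (M : Matrix (Fin k) ι ℤ)
    (b : ι → Kˣ) : IsClosed (coset K b {y | mpow K M y = 1}) := by
  have : coset K b {y | mpow K M y = 1} = ⋂ j, {y | chi y (M j) = chi b (M j)} := by
    ext y
    rw [mem_coset_mpow_eq_one_iff, funext_iff, Set.mem_iInter]
    rfl
  rw [this]
  exact isClosed_iInter fun j => isClosed_chi_eq (M j) _

variable [IsAlgClosed K]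

instance : IsAlgClosed (algConst K) :=
  (algebraicClosure.isAlgClosure (⊥ : Subfield K) K).isAlgClosed

section Locus

variable {n : ℕ} {b : Fin n → Kˣ}

lemma trdegQ_le_vdim_locusOver (b : Fin n → Kˣ) :
    trdegQ K (Set.range fun i => (b i : K)) ≤ vdim K (locusOver K (algConst K : Set K) b) := by
  obtain ⟨t, hts, hcard, hind⟩ := exists_algebraicIndependent_card_eq_trdegQ
    (Set.finite_range fun i => (b i : K))
  choose j hj using fun x : {y : K // y ∈ t} => hts x.2
  have hind' : AlgebraicIndependent (algConst K) fun x => (b (j x) : K) := by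
    simp only [hj]
    exact hind.algebraicClosure
  simpa [hcard] using card_le_vdim_locusOver hind'

lemma cd_locusOver_le (hdelta : (ldim K b : ℤ) ≤ 2 * trdegQ K (Set.range fun i => (b i : K))) :
    cd K (locusOver K (algConst K : Set K) b) ≤ vdim K (locusOver K (algConst K : Set K) b) := by
  have := isTorsionFree_quotient_relLattice b
  have hcd := cd_le_of_subset_coset (isSubtorus_latTorus _) (locusOver_subset_coset_latTorus b)
  rw [vdim_latTorus, ← ldim_eq_finrank_quotient] at hcd
  have htrdeg := trdegQ_le_vdim_locusOver b
  lia

lemma exists_cdMaximal_isMinTorus {W : Set (Fin n → Kˣ)}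
    (hdelta : (ldim K b : ℤ) ≤ 2 * trdegQ K (Set.range fun i => (b i : K)))
    (hW : IsClosedOver K (algConst K : Set K) W) (hb : b ∈ W) :
    ∃ S T, CdMaximal K S W ∧ IsMinTorus K S T ∧ locusOver K (algConst K : Set K) b ⊆ S ∧
      vdim K T ≤ 2 * vdim K S := by
  have hV : IsIrredVar K (locusOver K (algConst K : Set K) b) := isIrredVar_locusOver b
  obtain ⟨S, hS, hVS, hcd⟩ := exists_cdMaximal_superset hV (locusOver_subset hW hb)
  have hT := isMinTorus_constLat hS.1
  refine ⟨S, _, hS, hT, hVS, ?_⟩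
  have hdim := vdim_mono (isIrredVar_iff.mp hV).1 (isIrredVar_iff.mp hS.1).1 hV.2.1 hVS
  calc vdim K (latTorus K (constLat S)) ≤ cd K S + vdim K S := vdim_minTorus_le hT
    _ ≤ cd K (locusOver K (algConst K : Set K) b) + vdim K S := by gcongr
    _ ≤ 2 * vdim K S := by have := cd_locusOver_le hdelta; lia

/-- The locus of `b` contains a point algebraic over the prime field, where `y ↦ y^M` takes the
same value as at `b`. -/
lemma isOfFinOrder_mpow {k : ℕ} {M : Matrix (Fin k) (Fin n) ℤ}
    (hdelta : (ldim K (mpow K M b) : ℤ) ≤ 2 * trdegQ K (Set.range fun i => (mpow K M b i : K)))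
    (hM : locusOver K (algConst K : Set K) b ⊆ coset K b {y | mpow K M y = 1}) (j : Fin k) :
    IsOfFinOrder (mpow K M b j) := by
  obtain ⟨x, hx, hxalg⟩ := exists_mem_locusOver_forall_mem (E := algConst K) b
  refine isOfFinOrder_of_isAlgebraic hdelta (fun i => mem_algConst.mp ?_) j
  rw [← mem_coset_mpow_eq_one_iff.mp (hM hx), mpow, Units.coe_prod]
  simp only [Units.val_zpow_eq_zpow_val]
  exact prod_mem fun i _ => zpow_mem (hxalg i) _

end Locus

theorem green_points_satisfy_dependence_general (U : Subgroup Kˣ)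
    (hdelta : ∀ (m : ℕ) (y : Fin m → Kˣ), (∀ i, y i ∈ U) →
      (ldim K y : ℤ) ≤ 2 * (trdegQ K (Set.range fun i => ((y i : Kˣ) : K)) : ℤ))
    {n : ℕ} {W : Set (Fin n → Kˣ)} (hW : IsClosedOver K (algConst K : Set K) W)
    (hdim : 2 * vdim K W < n) {α : Type} {k : α → ℕ} {M : ∀ i, Matrix (Fin (k i)) (Fin n) ℤ}
    (hcdmax : ∀ S, CdMaximal K S W → ∀ T, IsMinTorus K S T →
      T = Set.univ ∨ ∃ i, T = {y | mpow K (M i) y = 1})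
    {b : Fin n → Kˣ} (hbW : b ∈ W) (hbU : ∀ i, b i ∈ U)
    (hb : ∀ i, vdim K (W ∩ coset K b {y | mpow K (M i) y = 1}) +
      vdim K (zcl K (mpow K (M i) '' W)) ≤ vdim K W) :
    ∃ i, zcl K (mpow K (M i) '' W) ≠ Set.univ ∧ ∀ j, IsOfFinOrder (mpow K (M i) b j) := by
  obtain ⟨S, T, hS, hT, hbS, hle⟩ := exists_cdMaximal_isMinTorus (hdelta n b hbU) hW hbW
  have hSW := vdim_mono (isIrredVar_iff.mp hS.1).1 hW.isClosed hS.1.2.1 hS.2.1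
  rcases hcdmax S hS T hT with rfl | ⟨i, rfl⟩
  · rw [vdim_univ, Fintype.card_fin] at hle
    lia
  · have hST : S ⊆ coset K b {y | mpow K (M i) y = 1} := by
      obtain ⟨c, hc⟩ := hT.2.1
      exact fun y hy => mem_coset_mpow_eq_one_iff.mpr <|
        (mem_coset_mpow_eq_one_iff.mp (hc hy)).trans
          (mem_coset_mpow_eq_one_iff.mp (hc (hbS (mem_locusOver b)))).symm
    refine ⟨i, fun huniv => ?_, isOfFinOrder_mpow (hdelta _ _ fun j => ?_) (hbS.trans hST)⟩
    · have hSdim := vdim_mono (isIrredVar_iff.mp hS.1).1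
        (hW.isClosed.inter (isClosed_coset_mpow_eq_one (M i) b)) hS.1.2.1
        (Set.subset_inter hS.2.1 hST)
      have hTdim := card_le_vdim_add (K := K) (M i)
      have hb := hb i
      rw [huniv, vdim_univ, Fintype.card_fin] at hb
      rw [Fintype.card_fin] at hTdim
      lia
    · exact prod_mem fun t _ => zpow_mem (hbU t) _

end GreenPoints

/-- The key step in the proof that the free amalgamation class is
axiomatisable: under the Weak CIT data (a) for `W`, the monomial images (b), and the Laurent
data (c), every green point of `W` outside the exceptional set `W*` satisfies one of the
multiplicative dependencies `b^{M_i} ∈ H_{ij}`. -/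
theorem green_points_satisfy_dependence
    (K : Type) [Field K] [IsAlgClosed K] [CharZero K]
    (U : Subgroup Kˣ) (hdiv : DivisibleSub K U)
    (hdelta : ∀ (m : ℕ) (y : Fin m → Kˣ), (∀ i, y i ∈ U) →
      (ldim K y : ℤ) ≤ 2 * (trdegQ K (Set.range fun i => ((y i : Kˣ) : K)) : ℤ))
    {n : ℕ} (hn : 1 ≤ n) (W : Set (Fin n → Kˣ))
    (hWirr : IsIrredVar K W) (hWQ : IsClosedOver K (↑(⊥ : Subfield K)) W)
    (hWdim : 2 * vdim K W < n)
    (s : ℕ) (T : Fin s → Set (Fin n → Kˣ))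
    (hTsub : ∀ i, IsSubtorus K (T i) ∧ T i ≠ Set.univ)
    (hcdmax : ∀ S, CdMaximal K S W → ∀ T', IsMinTorus K S T' →
      T' = Set.univ ∨ ∃ i, T' = T i)
    (k : Fin s → ℕ) (M : ∀ i, Matrix (Fin (k i)) (Fin n) ℤ)
    (hrk : ∀ i, (M i).rank = k i) (hTM : ∀ i, T i = {y | mpow K (M i) y = 1})
    (Wi : ∀ i, Set (Fin (k i) → Kˣ)) (hWi : ∀ i, Wi i = zcl K (mpow K (M i) '' W))
    (r : Fin s → ℕ) (H : ∀ i, Fin (r i) → Set (Fin (k i) → Kˣ))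
    (hH : ∀ i, Wi i ≠ Set.univ →
      (∀ j, IsAlgSubgroup K (H i j) ∧ H i j ≠ Set.univ) ∧
      (∀ y ∈ Wi i, (∀ t, IsOfFinOrder (y t)) → ∃ j, y ∈ H i j))
    (Wstar : Set (Fin n → Kˣ))
    (hWstar : Wstar =
      ⋃ i, {b ∈ W | vdim K W < vdim K (W ∩ coset K b (T i)) + vdim K (Wi i)}) :
    ∀ b ∈ W, b ∉ Wstar → (∀ t, b t ∈ U) →
      ∃ i, Wi i ≠ Set.univ ∧ ∃ j, mpow K (M i) b ∈ H i j := by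
  intro b hbW hb hbU
  obtain rfl : T = fun i => {y | mpow K (M i) y = 1} := funext hTM
  obtain rfl : Wi = fun i => zcl K (mpow K (M i) '' W) := funext hWi
  rw [hWstar, Set.mem_iUnion, not_exists] at hb
  obtain ⟨i, hne, htor⟩ := green_points_satisfy_dependence_general U hdelta
    (hWQ.mono (SetLike.coe_subset_coe.mpr bot_le)) hWdim hcdmax hbW hbU
    fun i => not_lt.mp fun hlt => hb i ⟨hbW, hlt⟩
  exact ⟨i, hne, (hH i hne).2 _ (Set.mem_sInter.mpr fun C hC => hC.2 ⟨b, hbW, rfl⟩) htor⟩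

end BadFields
end

section
/- Let K be an algebraically closed field of characteristic 0, let A = ⟨A⟩ ⊆ Kˣ, and let b ∈ (Kˣ)ⁿ be a tuple such that the extension ⟨A ∪ b⟩/A is minimal prealgebraic of length n. Let T ⊆ (Kˣ)ⁿ × (Kˣ)ⁿ be a correspondence torus and let b' ∈ (Kˣ)ⁿ be such that (b, b') ∈ T. Then ⟨A ∪ b'⟩ = ⟨A ∪ b⟩, and the extension ⟨A ∪ b'⟩/A is minimal prealgebraic of length n. -/
namespace BadFields

variable (K : Type) [Field K]

/-!
The torus `T` is the common kernel of a lattice `N` of characters of `(Kˣ)ⁿ × (Kˣ)ⁿ`. A flag of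
quotients of `ℤ²ⁿ ⧸ N` gives a strict chain of irreducible subtori of `T`, so `ℤ²ⁿ ⧸ N` has rank at
most `dim T = n`, and `N` has rank at least `n`. Because `T` projects onto both factors and `Kˣ` has
infinite exponent, both projections `N → ℤⁿ` are injective, hence have image of finite index. Thus
some power of each coordinate of `b'` is a monomial in `b`, and vice versa, so `⟨b⟩ = ⟨b'⟩`.

Being minimal prealgebraic depends on `b` only through `⟨A ∪ b⟩`: the linear dimension is the rank
of a subgroup of `Kˣ ⧸ ⟨A⟩`, and the transcendence degree is the rank of `b` in the matroid of
algebraic independence, where elements of `⟨A ∪ b⟩` lie in the closure of `b`.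
-/

section RankLemmas

variable {R M : Type*} [CommRing R] [IsDomain R] [AddCommGroup M] [Module R M]

theorem exists_smul_mem_of_finrank_le [Module.Finite R M] (N : Submodule R M)
    (h : Module.finrank R M ≤ Module.finrank R N) (x : M) : ∃ a : R, a ≠ 0 ∧ a • x ∈ N := by
  have hquot : Module.finrank R (M ⧸ N) = 0 := by
    have := N.finrank_quotient_add_finrank
    omega
  obtain ⟨a, ha⟩ := Module.finrank_eq_zero_iff_isTorsion.1 hquot (x := N.mkQ x)
  exact ⟨a, nonZeroDivisors.ne_zero a.2, (Submodule.Quotient.mk_eq_zero N).1 ha⟩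

theorem finrank_le_of_forall_smul_mem {P Q : Submodule R M} [Module.Finite R P] [Module.Finite R Q]
    (h : ∀ x ∈ P, ∃ a : R, a ≠ 0 ∧ a • x ∈ Q) : Module.finrank R P ≤ Module.finrank R Q := by
  have htors : Module.IsTorsion R (P ⧸ Q.comap P.subtype) := by
    intro x
    obtain ⟨x, rfl⟩ := Submodule.mkQ_surjective _ x
    obtain ⟨a, ha, hax⟩ := h x x.2
    exact ⟨⟨a, mem_nonZeroDivisors_of_ne_zero ha⟩, (Submodule.Quotient.mk_eq_zero _).2 hax⟩
  have hle : Module.finrank R (Q.comap P.subtype) ≤ Module.finrank R Q :=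
    LinearMap.finrank_le_finrank_of_injective (f := P.subtype.restrict fun _ hx => hx) <|
      .of_comp (f := Q.subtype) (P.injective_subtype.comp (Submodule.injective_subtype _))
  have := (Q.comap P.subtype).finrank_quotient_add_finrank
  rw [Module.finrank_eq_zero_iff_isTorsion.2 htors] at this
  omega

theorem exists_surjective_pi_finrank [IsPrincipalIdealRing R] [Module.Finite R M] :
    ∃ f : M →ₗ[R] (Fin (Module.finrank R M) → R), Function.Surjective f := by
  have hrank : Module.finrank R (M ⧸ Submodule.torsion R M) = Module.finrank R M :=
    finrank_quotient_eq_of_le_torsion le_rfl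
  let e := (Module.finBasisOfFinrankEq R (M ⧸ Submodule.torsion R M) hrank).equivFun
  exact ⟨e.toLinearMap ∘ₗ (Submodule.torsion R M).mkQ,
    e.surjective.comp (Submodule.mkQ_surjective _)⟩

end RankLemmas

section Characters

variable {ι κ G : Type*} [Fintype ι] [Fintype κ] [CommGroup G]

/-- The pairing of points of the torus `G^ι` with its characters: `charEval y c` is the monomial
`y ^ c`. The target is written additively so that a point of the torus is the same thing as
a `ℤ`-linear map on the character lattice. -/
noncomputable def charEval : (ι → G) ≃ ((ι → ℤ) →ₗ[ℤ] Additive G) :=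
  (Equiv.piCongrRight fun _ => Additive.ofMul).trans ((Pi.basisFun ℤ ι).constr ℤ).toEquiv

theorem charEval_apply (y : ι → G) (c : ι → ℤ) :
    charEval y c = Additive.ofMul (∏ i, y i ^ c i) := by
  simp [charEval, Module.Basis.constr_apply_fintype]

theorem charEval_single [DecidableEq ι] (y : ι → G) (i : ι) (k : ℤ) :
    charEval y (Pi.single i k) = Additive.ofMul (y i ^ k) := by
  simp [charEval_apply, Pi.single_apply]

theorem charEval_sumElim (x : ι → G) (y : κ → G) (c : ι ⊕ κ → ℤ) :
    charEval (Sum.elim x y) c = charEval x (c ∘ Sum.inl) + charEval y (c ∘ Sum.inr) := by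
  simp [charEval_apply]

theorem toMul_charEval_mem {H : Subgroup G} {y : ι → G} (hy : ∀ i, y i ∈ H) (c : ι → ℤ) :
    (charEval y c).toMul ∈ H := by
  rw [charEval_apply]
  exact prod_mem fun i _ => zpow_mem (hy i) (c i)

/-- The homomorphism of tori `G^κ → G^ι` dual to a map `f` of character lattices. -/
noncomputable def monomialMap (f : (ι → ℤ) →ₗ[ℤ] (κ → ℤ)) (t : κ → G) : ι → G :=
  charEval.symm (charEval t ∘ₗ f)

theorem charEval_monomialMap (f : (ι → ℤ) →ₗ[ℤ] (κ → ℤ)) (t : κ → G) :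
    charEval (monomialMap f t) = charEval t ∘ₗ f :=
  charEval.apply_symm_apply _

/-- The subgroup of the torus `G^ι` on which all characters in the lattice `N` are trivial. -/
def charAnnihilator (G : Type*) [CommGroup G] (N : Submodule ℤ (ι → ℤ)) : Set (ι → G) :=
  {y | N ≤ LinearMap.ker (charEval y)}

theorem charAnnihilator_anti {N N' : Submodule ℤ (ι → ℤ)} (h : N ≤ N') :
    charAnnihilator G N' ⊆ charAnnihilator G N :=
  fun _ hy => h.trans hy

theorem monomialMap_mem_charAnnihilator_ker (f : (ι → ℤ) →ₗ[ℤ] (κ → ℤ)) (t : κ → G) :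
    monomialMap f t ∈ charAnnihilator G (LinearMap.ker f) := by
  rw [charAnnihilator, Set.mem_ofPred_eq, charEval_monomialMap]
  exact LinearMap.ker_le_ker_comp f _

theorem charAnnihilator_ker {f : (ι → ℤ) →ₗ[ℤ] (κ → ℤ)} (hf : Function.Surjective f) :
    charAnnihilator G (LinearMap.ker f) = Set.range (monomialMap f) := by
  ext y
  constructor
  · intro hy
    let χ : (κ → ℤ) →ₗ[ℤ] Additive G :=
      (LinearMap.ker f).liftQ (charEval y) hy ∘ₗ (f.quotKerEquivOfSurjective hf).symm.toLinearMap
    have hχ : χ ∘ₗ f = charEval y := by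
      ext1 c
      have hc : (f.quotKerEquivOfSurjective hf).symm (f c) = (LinearMap.ker f).mkQ c :=
        (LinearEquiv.symm_apply_eq _).2 rfl
      simp only [χ, LinearMap.comp_apply, LinearEquiv.coe_coe, hc]
      exact (LinearMap.ker f).liftQ_apply _ c
    exact ⟨charEval.symm χ, charEval.injective (by simp [charEval_monomialMap, hχ])⟩
  · rintro ⟨t, rfl⟩
    exact monomialMap_mem_charAnnihilator_ker f t

theorem exists_charEval_ne_zero (hG : Monoid.exponent G = 0) {c : ι → ℤ} (hc : c ≠ 0) :
    ∃ y : ι → G, charEval y c ≠ 0 := by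
  classical
  obtain ⟨i, hi⟩ := Function.ne_iff.1 hc
  obtain ⟨u, hu⟩ := Monoid.exponent_eq_zero_iff_forall.1 hG _ (Int.natAbs_pos.2 hi)
  refine ⟨Pi.mulSingle i u, ?_⟩
  rwa [charEval_apply, Finset.prod_eq_single i (fun j _ hj => by simp [hj]) (by simp),
    Pi.mulSingle_eq_same, Ne, ofMul_eq_zero, ← pow_natAbs_eq_one]

theorem injective_of_forall_exists_charEval {L : Type*} [AddCommGroup L]
    (hG : Monoid.exponent G = 0) {p : L →ₗ[ℤ] (ι → ℤ)} {q : L →ₗ[ℤ] (κ → ℤ)}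
    (hpq : LinearMap.ker p ⊓ LinearMap.ker q = ⊥)
    (hx : ∀ x : ι → G, ∃ y : κ → G, ∀ m, charEval x (p m) + charEval y (q m) = 0) :
    Function.Injective q := by
  refine LinearMap.ker_eq_bot.1 (le_bot_iff.1 fun m hm => hpq.le ⟨?_, hm⟩)
  by_contra hpm
  obtain ⟨x, hxm⟩ := exists_charEval_ne_zero hG hpm
  obtain ⟨y, hy⟩ := hx x
  exact hxm (by simpa [LinearMap.mem_ker.1 hm] using hy m)

theorem charAnnihilator_ker_subset_iff {κ : Type*} [Finite κ] (hG : Monoid.exponent G = 0)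
    {f : (ι → ℤ) →ₗ[ℤ] (κ → ℤ)} {N : Submodule ℤ (ι → ℤ)} :
    charAnnihilator G (LinearMap.ker f) ⊆ charAnnihilator G N ↔ N ≤ LinearMap.ker f := by
  have := Fintype.ofFinite κ
  refine ⟨fun h c hc => ?_, charAnnihilator_anti⟩
  by_contra hfc
  obtain ⟨t, ht⟩ := exists_charEval_ne_zero hG hfc
  exact ht (by simpa [charEval_monomialMap] using h (monomialMap_mem_charAnnihilator_ker f t) hc)

end Characters

section Quotient

variable {ι κ G : Type*} [Fintype ι] [Fintype κ] [CommGroup G]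

/-- The values of the characters at the point `y` modulo the subgroup `H`. -/
noncomputable def charEvalMod (H : Subgroup G) (y : ι → G) : (ι → ℤ) →ₗ[ℤ] Additive (G ⧸ H) :=
  charEval fun i => (y i : G ⧸ H)

/-- The rank of the subgroup of `G ⧸ H` generated by the coordinates of `y`. For `H = ⟨A⟩` this
is the linear dimension of `y` over `A`. -/
noncomputable def rankMod (H : Subgroup G) (y : ι → G) : ℕ :=
  Module.finrank ℤ (LinearMap.range (charEvalMod H y))

theorem charEvalMod_apply (H : Subgroup G) (y : ι → G) (c : ι → ℤ) :
    charEvalMod H y c = Additive.ofMul ((charEval y c).toMul : G ⧸ H) := by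
  rw [charEvalMod, charEval_apply, charEval_apply, toMul_ofMul, QuotientGroup.mk_prod]
  rfl

theorem rankMod_add_finrank {H : Subgroup G} {y : ι → G} {N : Submodule ℤ (ι → ℤ)}
    (hN : ∀ c, c ∈ N ↔ (charEval y c).toMul ∈ H) :
    rankMod H y + Module.finrank ℤ N = Fintype.card ι := by
  have hker : N = LinearMap.ker (charEvalMod H y) := by
    ext c
    rw [hN, LinearMap.mem_ker, charEvalMod_apply, ofMul_eq_zero, QuotientGroup.eq_one_iff]
  rw [rankMod, hker, ← (charEvalMod H y).quotKerEquivRange.finrank_eq,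
    Submodule.finrank_quotient_add_finrank, Module.finrank_fintype_fun_eq_card]

theorem ofMul_mk_mem_range_charEvalMod {H : Subgroup G} {y : ι → G} {g : G}
    (hg : g ∈ H ⊔ Subgroup.closure (Set.range y)) :
    Additive.ofMul (g : G ⧸ H) ∈ LinearMap.range (charEvalMod H y) := by
  classical
  let P := (LinearMap.range (charEvalMod H y)).toAddSubgroup.toSubgroup'.comap (QuotientGroup.mk' H)
  suffices h : H ⊔ Subgroup.closure (Set.range y) ≤ P from h hg
  refine sup_le (fun u hu => ?_) ((Subgroup.closure_le _).2 ?_)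
  · exact ⟨0, by rw [map_zero, QuotientGroup.mk'_apply, (QuotientGroup.eq_one_iff u).2 hu]; rfl⟩
  · rintro _ ⟨i, rfl⟩
    exact ⟨Pi.single i 1, by rw [charEvalMod, charEval_single, zpow_one]; rfl⟩

theorem rankMod_le_rankMod {H : Subgroup G} {x : ι → G} {y : κ → G}
    (h : ∀ c, ∃ k : ℕ, k ≠ 0 ∧ (charEval x c).toMul ^ k ∈ H ⊔ Subgroup.closure (Set.range y)) :
    rankMod H x ≤ rankMod H y := by
  refine finrank_le_of_forall_smul_mem ?_
  rintro _ ⟨c, rfl⟩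
  obtain ⟨k, hk, hc⟩ := h c
  refine ⟨k, Nat.cast_ne_zero.2 hk, ?_⟩
  rw [charEvalMod_apply, natCast_zsmul, ← ofMul_pow, ← QuotientGroup.mk_pow]
  exact ofMul_mk_mem_range_charEvalMod hc

end Quotient

theorem exponent_units_eq_zero (K : Type*) [Field K] [Infinite K] : Monoid.exponent Kˣ = 0 := by
  by_contra h
  have : NeZero (Monoid.exponent Kˣ) := ⟨h⟩
  have hroots : ∀ x : K, x ≠ 0 → x ^ Monoid.exponent Kˣ = 1 := fun x hx =>
    congrArg Units.val (Monoid.pow_exponent_eq_one (Units.mk0 x hx))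
  have hfin : (Polynomial.nthRootsFinset (Monoid.exponent Kˣ) (1 : K) : Set K).Finite :=
    Finset.finite_toSet _
  refine (Set.finite_singleton (0 : K)).infinite_compl (hfin.subset fun x hx => ?_)
  exact (Polynomial.mem_nthRootsFinset (Nat.pos_of_ne_zero h) _).2 (hroots x hx)

section Zariski

variable {ι κ : Type} [Fintype ι] [Fintype κ]

variable (κ) in
/-- The `K`-algebra of Laurent polynomial functions on the torus `(Kˣ)^κ`, encoded as those
functions which become polynomial when multiplied by a power of the product of the coordinates. -/
def laurentFun : Subalgebra K ((κ → Kˣ) → K) where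
  carrier := {F | ∃ (p : MvPolynomial κ K) (m : ℕ), ∀ t : κ → Kˣ,
    F t * (∏ i, (t i : K)) ^ m = MvPolynomial.eval (fun i => (t i : K)) p}
  mul_mem' := by
    rintro F G ⟨p, m, hp⟩ ⟨q, k, hq⟩
    refine ⟨p * q, m + k, fun t => ?_⟩
    rw [map_mul, ← hp, ← hq, Pi.mul_apply]
    ring
  add_mem' := by
    rintro F G ⟨p, m, hp⟩ ⟨q, k, hq⟩
    refine ⟨p * (∏ i, MvPolynomial.X i) ^ k + q * (∏ i, MvPolynomial.X i) ^ m, m + k, fun t => ?_⟩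
    simp only [map_add, map_mul, map_pow, map_prod, MvPolynomial.eval_X, ← hp, ← hq, Pi.add_apply]
    ring
  algebraMap_mem' a := ⟨MvPolynomial.C a, 0, fun t => by simp⟩

variable {K}

theorem coe_apply_zpow_mem_laurentFun (i : κ) (k : ℤ) :
    (fun t : κ → Kˣ => ((t i ^ k : Kˣ) : K)) ∈ laurentFun K κ := by
  classical
  have hX : (fun t : κ → Kˣ => (t i : K)) ∈ laurentFun K κ :=
    ⟨MvPolynomial.X i, 0, fun t => by simp⟩
  have hXinv : (fun t : κ → Kˣ => ((t i)⁻¹ : K)) ∈ laurentFun K κ := by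
    refine ⟨∏ j ∈ Finset.univ.erase i, MvPolynomial.X j, 1, fun t => ?_⟩
    rw [← Finset.mul_prod_erase _ _ (Finset.mem_univ i)]
    simp
  obtain ⟨m, rfl | rfl⟩ := k.eq_nat_or_neg
  · simpa [Pi.pow_def] using pow_mem hX m
  · simpa [Pi.pow_def] using pow_mem hXinv m

theorem charEval_mem_laurentFun (c : κ → ℤ) :
    (fun t : κ → Kˣ => ((charEval t c).toMul : K)) ∈ laurentFun K κ := by
  have := prod_mem fun i (_ : i ∈ Finset.univ) => coe_apply_zpow_mem_laurentFun (K := K) i (c i)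
  simpa [charEval_apply, Finset.prod_fn] using this

theorem eval_monomialMap_mem_laurentFun (f : (ι → ℤ) →ₗ[ℤ] (κ → ℤ)) (p : MvPolynomial ι K) :
    (fun t : κ → Kˣ => MvPolynomial.eval (fun i => ((monomialMap f t i : Kˣ) : K)) p) ∈
      laurentFun K κ := by
  classical
  have hcoord (i : ι) : (fun t : κ → Kˣ => ((monomialMap f t i : Kˣ) : K)) ∈ laurentFun K κ := by
    have hi (t : κ → Kˣ) : monomialMap f t i = (charEval t (f (Pi.single i 1))).toMul := by
      rw [← LinearMap.comp_apply, ← charEval_monomialMap, charEval_single, zpow_one, toMul_ofMul]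
    simpa only [hi] using charEval_mem_laurentFun _
  induction p using MvPolynomial.induction_on with
  | C a => simp only [MvPolynomial.eval_C]; exact (laurentFun K κ).algebraMap_mem a
  | add p q hp hq => simp only [map_add]; exact add_mem hp hq
  | mul_X p i hp => simp only [map_mul, MvPolynomial.eval_X]; exact mul_mem hp (hcoord i)

theorem eq_zero_or_eq_zero_of_mem_laurentFun [Infinite K] {F G : (κ → Kˣ) → K}
    (hF : F ∈ laurentFun K κ) (hG : G ∈ laurentFun K κ) (h : F * G = 0) : F = 0 ∨ G = 0 := by
  obtain ⟨p, m, hp⟩ := hF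
  obtain ⟨q, k, hq⟩ := hG
  have hne (t : κ → Kˣ) (l : ℕ) : (∏ i, (t i : K)) ^ l ≠ 0 :=
    pow_ne_zero l (Finset.prod_ne_zero_iff.2 fun i _ => (t i).ne_zero)
  have hpq : p * q = 0 := by
    refine MvPolynomial.funext_set (fun _ => {0}ᶜ)
      (fun _ => (Set.finite_singleton (0 : K)).infinite_compl) fun x hx => ?_
    let t : κ → Kˣ := fun i => Units.mk0 (x i) (hx i trivial)
    have ht : F t * G t = 0 := congrFun h t
    change MvPolynomial.eval (fun i => (t i : K)) (p * q) = _
    rw [map_mul, map_zero, ← hp, ← hq, mul_mul_mul_comm, ht, zero_mul]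
  refine (mul_eq_zero.1 hpq).imp ?_ ?_ <;> rintro rfl <;> ext t
  · simpa [hne] using hp t
  · simpa [hne] using hq t

theorem isZClosed_setOf_forall_eq_zero {S : Set ((κ → Kˣ) → K)} (hS : S ⊆ laurentFun K κ) :
    IsZClosed K {t | ∀ F ∈ S, F t = 0} := by
  refine ⟨{p | ∃ F ∈ S, ∃ m : ℕ, ∀ t : κ → Kˣ,
    F t * (∏ i, (t i : K)) ^ m = MvPolynomial.eval (fun i => (t i : K)) p}, ?_⟩
  ext t
  constructor
  · rintro ht p ⟨F, hF, m, hp⟩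
    rw [← hp, ht F hF, zero_mul]
  · intro ht F hF
    obtain ⟨p, m, hp⟩ := hS hF
    have := (hp t).trans (ht p ⟨F, hF, m, hp⟩)
    simpa [Finset.prod_eq_zero_iff] using this

theorem isZClosed_charAnnihilator (N : Submodule ℤ (κ → ℤ)) :
    IsZClosed K (charAnnihilator Kˣ N) := by
  have hclosed := isZClosed_setOf_forall_eq_zero
    (S := (fun c (t : κ → Kˣ) => ((charEval t c).toMul : K) - 1) '' N) <| by
      rintro _ ⟨c, -, rfl⟩
      exact sub_mem (charEval_mem_laurentFun c) (one_mem _)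
  convert hclosed using 1
  ext t
  simp [charAnnihilator, SetLike.le_def, sub_eq_zero]

theorem isIrredVar_range_monomialMap [Infinite K] {f : (ι → ℤ) →ₗ[ℤ] (κ → ℤ)}
    (hf : IsZClosed K (Set.range (monomialMap (G := Kˣ) f))) :
    IsIrredVar K (Set.range (monomialMap (G := Kˣ) f)) := by
  refine ⟨hf, Set.range_nonempty _, ?_⟩
  rintro _ _ ⟨S₁, rfl⟩ ⟨S₂, rfl⟩ hcover
  by_contra! hcon
  have hsep (S : Set (MvPolynomial ι K))
      (hS : ¬ Set.range (monomialMap (G := Kˣ) f) ⊆ zeroSet K S) : ∃ p ∈ S,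
        (fun t : κ → Kˣ => MvPolynomial.eval (fun i => ((monomialMap f t i : Kˣ) : K)) p) ≠ 0 := by
    contrapose! hS
    rintro _ ⟨t, rfl⟩ p hp
    exact congrFun (hS p hp) t
  obtain ⟨p, hp, hp0⟩ := hsep S₁ hcon.1
  obtain ⟨q, hq, hq0⟩ := hsep S₂ hcon.2
  refine (eq_zero_or_eq_zero_of_mem_laurentFun (eval_monomialMap_mem_laurentFun f p)
    (eval_monomialMap_mem_laurentFun f q) ?_).elim hp0 hq0
  ext t
  obtain ht | ht := hcover ⟨t, rfl⟩
  · simp [ht p hp]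
  · simp [ht q hq]

theorem isIrredVar_charAnnihilator_ker [Infinite K] {κ : Type} [Finite κ]
    {f : (ι → ℤ) →ₗ[ℤ] (κ → ℤ)} (hf : Function.Surjective f) :
    IsIrredVar K (charAnnihilator Kˣ (LinearMap.ker f)) := by
  have := Fintype.ofFinite κ
  have hclosed := isZClosed_charAnnihilator (K := K) (LinearMap.ker f)
  rw [charAnnihilator_ker hf] at hclosed ⊢
  exact isIrredVar_range_monomialMap hclosed

end Zariski

section Dimension

variable {ι : Type} {K}

theorem IsIrredVar.isPrime_vanishingIdeal {V : Set (ι → Kˣ)} (hV : IsIrredVar K V) :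
    (MvPolynomial.vanishingIdeal K ((fun x i => (x i : K)) '' V)).IsPrime := by
  obtain ⟨-, hne, hirred⟩ := hV
  have hsub (p : MvPolynomial ι K) : V ⊆ zeroSet K {p} ↔
      p ∈ MvPolynomial.vanishingIdeal K ((fun x i => (x i : K)) '' V) := by
    simp [zeroSet, Set.subset_def, MvPolynomial.aeval_eq_eval]
  refine ⟨fun htop => ?_, fun {p q} hpq => ?_⟩
  · obtain ⟨x, hx⟩ := hne
    have := (hsub 1).2 (htop ▸ Submodule.mem_top) hx
    simp [zeroSet] at this
  · rw [← hsub, ← hsub]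
    refine hirred _ _ ⟨_, rfl⟩ ⟨_, rfl⟩ fun x hx => ?_
    simpa [zeroSet] using (hsub _).2 hpq hx

theorem IsZClosed.vanishingIdeal_lt {V W : Set (ι → Kˣ)} (hV : IsZClosed K V) (h : V < W) :
    MvPolynomial.vanishingIdeal K ((fun x i => (x i : K)) '' W) <
      MvPolynomial.vanishingIdeal K ((fun x i => (x i : K)) '' V) := by
  refine lt_of_le_not_ge (MvPolynomial.vanishingIdeal_anti_mono (Set.image_mono h.le))
    fun hle => h.not_ge ?_
  obtain ⟨S, rfl⟩ := hV
  intro x hx p hp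
  have hpV : p ∈ MvPolynomial.vanishingIdeal K ((fun x i => (x i : K)) '' zeroSet K S) := by
    rintro _ ⟨y, hy, rfl⟩
    simpa [MvPolynomial.aeval_eq_eval] using hy p hp
  simpa [MvPolynomial.aeval_eq_eval] using hle hpV _ ⟨x, hx, rfl⟩

theorem le_card_of_strictMono_isIrredVar [Finite ι] {d : ℕ} {W : Fin (d + 1) → Set (ι → Kˣ)}
    (hW : ∀ i, IsIrredVar K (W i)) (hmono : StrictMono W) : d ≤ Nat.card ι := by
  let chain : LTSeries (PrimeSpectrum (MvPolynomial ι K)) :=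
    { length := d
      toFun i := ⟨_, (hW i.rev).isPrime_vanishingIdeal⟩
      step i := (hW _).1.vanishingIdeal_lt (hmono (Fin.rev_lt_rev.2 i.castSucc_lt_succ)) }
  have hdim : (d : WithBot ℕ∞) ≤ ringKrullDim (MvPolynomial ι K) :=
    Order.LTSeries.length_le_krullDim chain
  rw [MvPolynomial.ringKrullDim_of_isNoetherianRing, ringKrullDim_eq_zero_of_field,
    zero_add] at hdim
  exact_mod_cast hdim

theorem le_vdim [Finite ι] {V : Set (ι → Kˣ)} {d : ℕ} {W : Fin (d + 1) → Set (ι → Kˣ)}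
    (hW : ∀ i, IsIrredVar K (W i)) (hWV : ∀ i, W i ⊆ V) (hmono : StrictMono W) :
    d ≤ vdim K V := by
  refine le_csSup ⟨Nat.card ι, ?_⟩ ⟨W, fun i => ⟨hW i, hWV i⟩, hmono⟩
  rintro _ ⟨W', hW', hmono'⟩
  exact le_card_of_strictMono_isIrredVar (fun i => (hW' i).1) hmono'

variable [Fintype ι]

theorem le_vdim_charAnnihilator [Infinite K] {N : Submodule ℤ (ι → ℤ)} {r : ℕ}
    {F : (ι → ℤ) →ₗ[ℤ] (Fin r → ℤ)} (hF : Function.Surjective F) (hN : N ≤ LinearMap.ker F) :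
    r ≤ vdim K (charAnnihilator Kˣ N) := by
  let f (j : Fin (r + 1)) : (ι → ℤ) →ₗ[ℤ] (Fin j → ℤ) :=
    LinearMap.funLeft ℤ ℤ (Fin.castLE j.is_le) ∘ₗ F
  have hf (j : Fin (r + 1)) : Function.Surjective (f j) :=
    (LinearMap.funLeft_surjective_of_injective ℤ ℤ _ (Fin.castLE_injective j.is_le)).comp hF
  refine le_vdim (W := fun j => charAnnihilator Kˣ (LinearMap.ker (f j)))
    (fun j => isIrredVar_charAnnihilator_ker (hf j))
    (fun j => charAnnihilator_anti (hN.trans (LinearMap.ker_le_ker_comp F _))) fun i j hij => ?_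
  have hij' : (i : ℕ) < j := hij
  refine ⟨charAnnihilator_anti fun c hc => ?_, fun hle => ?_⟩
  · ext l
    exact congrFun (LinearMap.mem_ker.1 hc) (Fin.castLE hij'.le l)
  · rw [charAnnihilator_ker_subset_iff (exponent_units_eq_zero K)] at hle
    obtain ⟨c, hc⟩ := hF (Pi.single ⟨i, by omega⟩ 1)
    have hci : c ∈ LinearMap.ker (f i) := by
      ext l
      simp [f, hc, LinearMap.funLeft_apply, Fin.ext_iff, l.2.ne]
    have hcj := congrFun (LinearMap.mem_ker.1 (hle hci)) ⟨i, hij'⟩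
    simp [f, hc, LinearMap.funLeft_apply] at hcj

theorem finrank_quotient_le_vdim_charAnnihilator [Infinite K] (N : Submodule ℤ (ι → ℤ)) :
    Module.finrank ℤ ((ι → ℤ) ⧸ N) ≤ vdim K (charAnnihilator Kˣ N) := by
  obtain ⟨g, hg⟩ := exists_surjective_pi_finrank (R := ℤ) (M := (ι → ℤ) ⧸ N)
  refine le_vdim_charAnnihilator (F := g ∘ₗ N.mkQ) (hg.comp N.mkQ_surjective) ?_
  simpa using LinearMap.ker_le_ker_comp N.mkQ g

end Dimension

section DivHull

variable {K} {A B : Set Kˣ} {x : Kˣ}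

theorem subset_divHull : A ⊆ divHull K A := fun x hx =>
  ⟨1, one_ne_zero, by simpa using Subgroup.subset_closure hx⟩

theorem mem_divHull_of_pow_mem {k : ℕ} (hk : k ≠ 0) (h : x ^ k ∈ divHull K A) :
    x ∈ divHull K A := by
  obtain ⟨l, hl, hx⟩ := h
  exact ⟨k * l, mul_ne_zero hk hl, by rwa [pow_mul]⟩

theorem mem_divHull_of_zpow_mem {k : ℤ} (hk : k ≠ 0) (h : x ^ k ∈ divHull K A) :
    x ∈ divHull K A := by
  obtain ⟨l, rfl | rfl⟩ := k.eq_nat_or_neg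
  all_goals exact mem_divHull_of_pow_mem (k := l) (by simpa using hk) (by simpa using h)

theorem divHull_le_iff : divHull K A ≤ divHull K B ↔ A ⊆ divHull K B := by
  refine ⟨fun h => subset_divHull.trans h, fun h x ⟨k, hk, hx⟩ => ?_⟩
  exact mem_divHull_of_pow_mem hk ((Subgroup.closure_le _).2 h hx)

theorem divHull_mono (h : A ⊆ B) : divHull K A ≤ divHull K B :=
  divHull_le_iff.2 (h.trans subset_divHull)

theorem subset_divHull_of_union_eq {S S' : Set Kˣ} (h : divHull K (A ∪ S) = divHull K (A ∪ S')) :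
    S ⊆ divHull K (A ∪ S') :=
  (Set.subset_union_right.trans subset_divHull).trans h.le

theorem divHull_union_congr (A : Set Kˣ) {S S' : Set Kˣ} (h : divHull K S = divHull K S') :
    divHull K (A ∪ S) = divHull K (A ∪ S') := by
  have hle {S S' : Set Kˣ} (h : divHull K S ≤ divHull K S') :
      divHull K (A ∪ S) ≤ divHull K (A ∪ S') :=
    divHull_le_iff.2 <| Set.union_subset (Set.subset_union_left.trans subset_divHull) <|
      (divHull_le_iff.1 h).trans (divHull_mono Set.subset_union_right)
  exact le_antisymm (hle h.le) (hle h.ge)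

end DivHull

section Correspondence

variable {K} {ι κ : Type} [Fintype ι] [Fintype κ]

theorem IsAlgSubgroup.exists_eq_charAnnihilator {T : Set (ι → Kˣ)} (hT : IsAlgSubgroup K T) :
    ∃ N : Submodule ℤ (ι → ℤ), T = charAnnihilator Kˣ N := by
  obtain ⟨k, M, rfl⟩ := hT
  refine ⟨Submodule.span ℤ (Set.range M.row), ?_⟩
  ext y
  rw [charAnnihilator, Set.mem_ofPred_eq, Set.mem_ofPred_eq, Submodule.span_le,
    Set.range_subset_iff, funext_iff]
  exact forall_congr' fun j => by
    rw [SetLike.mem_coe, LinearMap.mem_ker, charEval_apply, ofMul_eq_zero]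
    rfl

theorem range_subset_divHull_of_charEval {L : Type*} [AddCommGroup L] {p : L →ₗ[ℤ] (ι → ℤ)}
    {q : L →ₗ[ℤ] (κ → ℤ)} (hq : Function.Injective q)
    (hcard : Fintype.card κ ≤ Module.finrank ℤ L) {x : ι → Kˣ} {y : κ → Kˣ}
    (hxy : ∀ m, charEval x (p m) + charEval y (q m) = 0) :
    Set.range y ⊆ divHull K (Set.range x) := by
  classical
  rintro _ ⟨i, rfl⟩
  have hrank : Module.finrank ℤ (κ → ℤ) ≤ Module.finrank ℤ (LinearMap.range q) := by
    rwa [LinearMap.finrank_range_of_inj hq, Module.finrank_fintype_fun_eq_card]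
  obtain ⟨d, hd, m, hm⟩ := exists_smul_mem_of_finrank_le _ hrank (Pi.single i 1)
  have hyi : y i ^ d = (charEval x (-p m)).toMul := by
    rw [map_neg, eq_neg_of_add_eq_zero_left (hxy m), neg_neg, hm, map_smul, charEval_single,
      zpow_one, toMul_zsmul, toMul_ofMul]
  refine mem_divHull_of_zpow_mem hd ?_
  rw [hyi]
  exact toMul_charEval_mem (fun j => subset_divHull (Set.mem_range_self j)) _

theorem divHull_range_eq_of_correspondence [Infinite K] {T : Set (ι ⊕ ι → Kˣ)}
    (hT : IsAlgSubgroup K T) (hdim : vdim K T ≤ Fintype.card ι)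
    (hfst : ∀ x, ∃ y, Sum.elim x y ∈ T) (hsnd : ∀ y, ∃ x, Sum.elim x y ∈ T)
    {x y : ι → Kˣ} (hxy : Sum.elim x y ∈ T) :
    divHull K (Set.range y) = divHull K (Set.range x) := by
  obtain ⟨N, rfl⟩ := hT.exists_eq_charAnnihilator
  have hcard : Fintype.card ι ≤ Module.finrank ℤ N := by
    have hquot := (finrank_quotient_le_vdim_charAnnihilator N).trans hdim
    have hsum := N.finrank_quotient_add_finrank
    rw [Module.finrank_fintype_fun_eq_card, Fintype.card_sum] at hsum
    omega
  let p : N →ₗ[ℤ] (ι → ℤ) := LinearMap.funLeft ℤ ℤ Sum.inl ∘ₗ N.subtype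
  let q : N →ₗ[ℤ] (ι → ℤ) := LinearMap.funLeft ℤ ℤ Sum.inr ∘ₗ N.subtype
  have hmem {u v : ι → Kˣ} (h : Sum.elim u v ∈ charAnnihilator Kˣ N) (m : N) :
      charEval u (p m) + charEval v (q m) = 0 :=
    (charEval_sumElim u v m).symm.trans (h m.2)
  have hpq : LinearMap.ker p ⊓ LinearMap.ker q = ⊥ := by
    refine le_bot_iff.1 fun m hm => Subtype.ext (funext ?_)
    rintro (i | i)
    exacts [congrFun (LinearMap.mem_ker.1 hm.1) i, congrFun (LinearMap.mem_ker.1 hm.2) i]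
  have hp : Function.Injective p :=
    injective_of_forall_exists_charEval (exponent_units_eq_zero K) (inf_comm _ _ |>.trans hpq)
      fun v => (hsnd v).imp fun u huv m => (add_comm _ _).trans (hmem huv m)
  have hq : Function.Injective q :=
    injective_of_forall_exists_charEval (exponent_units_eq_zero K) hpq
      fun u => (hfst u).imp fun v huv => hmem huv
  exact le_antisymm
    (divHull_le_iff.2 (range_subset_divHull_of_charEval hq hcard (hmem hxy)))
    (divHull_le_iff.2 (range_subset_divHull_of_charEval hp hcard
      fun m => (add_comm _ _).trans (hmem hxy m)))

end Correspondence

section LinearDimension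

variable {K} {A : Set Kˣ} {n m : ℕ} {b : Fin n → Kˣ} {b' : Fin m → Kˣ}

theorem mem_relLattice {c : Fin n → ℤ} :
    c ∈ relLattice K A b ↔ (charEval b c).toMul ∈ divHull K A := by
  rw [charEval_apply]
  rfl

theorem ldimRel_eq_rankMod : ldimRel K A b = rankMod (divHull K A) b := by
  have h := rankMod_add_finrank fun c => mem_relLattice (A := A) (b := b) (c := c)
  rw [Fintype.card_fin] at h
  rw [ldimRel]
  omega

theorem ldimRel_le_of_range_subset (h : Set.range b' ⊆ divHull K (A ∪ Set.range b)) :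
    ldimRel K A b' ≤ ldimRel K A b := by
  rw [ldimRel_eq_rankMod, ldimRel_eq_rankMod]
  refine rankMod_le_rankMod fun c => ?_
  obtain ⟨k, hk, hx⟩ := toMul_charEval_mem (fun i => h (Set.mem_range_self i)) c
  rw [Subgroup.closure_union] at hx
  exact ⟨k, hk, sup_le_sup_right ((Subgroup.closure_le _).2 subset_divHull) _ hx⟩

end LinearDimension

section TranscendenceDegree

variable {K}

theorem coe_trdegOver_eq_eRk (F : Subfield K) {s : Set K} (hs : s.Finite) :
    (trdegOver K F s : ℕ∞) = (AlgebraicIndependent.matroid F K).eRk s := by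
  obtain ⟨r, hr⟩ := ENat.ne_top_iff_exists.1
    (((AlgebraicIndependent.matroid F K).eRk_le_encard s).trans_lt hs.encard_lt_top).ne
  have hset : {d | ∃ t : Finset K, ↑t ⊆ s ∧ t.card = d ∧
      AlgebraicIndependent F (fun x : {y : K // y ∈ t} => (x : K))} = Set.Iic r := by
    ext d
    rw [Set.mem_Iic, ← ENat.natCast_le_natCast, hr, Matroid.le_eRk_iff]
    constructor
    · rintro ⟨t, hts, rfl, ht⟩
      exact ⟨t, hts, ht, Set.encard_coe_eq_coe_finsetCard t⟩
    · rintro ⟨I, hIs, hI, hId⟩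
      lift I to Finset K using hs.subset hIs
      rw [Set.encard_coe_eq_coe_finsetCard] at hId
      exact ⟨I, hIs, by exact_mod_cast hId, hI⟩
  rw [trdegOver, hset, csSup_Iic, hr]

theorem trdegOver_le_of_forall_isAlgebraic {F : Subfield K} {s t : Set K} (hs : s.Finite)
    (ht : t.Finite) (h : ∀ x ∈ s, IsAlgebraic (Algebra.adjoin F t) x) :
    trdegOver K F s ≤ trdegOver K F t := by
  rw [← ENat.natCast_le_natCast, coe_trdegOver_eq_eRk F hs, coe_trdegOver_eq_eRk F ht,
    ← Matroid.eRk_closure_eq _ t, AlgebraicIndependent.matroid_closure_eq]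
  exact Matroid.eRk_mono _ h

theorem isAlgebraic_of_mem_divHull {R : Type*} [CommRing R] [IsDomain R] [Algebra R K]
    {A : Set Kˣ} (hA : ∀ a ∈ A, IsAlgebraic R (a : K)) {x : Kˣ} (hx : x ∈ divHull K A) :
    IsAlgebraic R (x : K) := by
  obtain ⟨k, hk, hx⟩ := hx
  refine IsAlgebraic.of_pow (Nat.pos_of_ne_zero hk) ?_
  rw [← Units.val_pow_eq_pow_val]
  generalize x ^ k = y at hx
  induction hx using Subgroup.closure_induction with
  | mem y hy => exact hA y hy
  | one => exact isAlgebraic_one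
  | mul y z _ _ hy hz => simpa using hy.mul hz
  | inv y _ hy => simpa using hy.inv

theorem trdegRel_le_of_range_subset {A : Set Kˣ} {n m : ℕ} {b : Fin n → Kˣ} {b' : Fin m → Kˣ}
    (h : Set.range b' ⊆ divHull K (A ∪ Set.range b)) : trdegRel K A b' ≤ trdegRel K A b := by
  refine trdegOver_le_of_forall_isAlgebraic (Set.finite_range _) (Set.finite_range _) ?_
  rintro _ ⟨i, rfl⟩
  let R := Algebra.adjoin (Subfield.closure (unitSet K A)) (Set.range fun j => (b j : K))
  have hR {z : K} (hz : z ∈ R) : IsAlgebraic R z := isAlgebraic_algebraMap (⟨z, hz⟩ : R)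
  refine isAlgebraic_of_mem_divHull ?_ (h ⟨i, rfl⟩)
  rintro a (ha | ⟨j, rfl⟩)
  · exact hR (R.algebraMap_mem ⟨a, Subfield.subset_closure ⟨a, ha, rfl⟩⟩)
  · exact hR (Algebra.subset_adjoin ⟨j, rfl⟩)

end TranscendenceDegree

section MinPrealg

variable {K} {A : Set Kˣ} {n : ℕ} {b b' : Fin n → Kˣ}

theorem ldimRel_congr (h : divHull K (A ∪ Set.range b') = divHull K (A ∪ Set.range b)) :
    ldimRel K A b' = ldimRel K A b :=
  (ldimRel_le_of_range_subset (subset_divHull_of_union_eq h)).antisymm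
    (ldimRel_le_of_range_subset (subset_divHull_of_union_eq h.symm))

theorem trdegRel_congr (h : divHull K (A ∪ Set.range b') = divHull K (A ∪ Set.range b)) :
    trdegRel K A b' = trdegRel K A b :=
  (trdegRel_le_of_range_subset (subset_divHull_of_union_eq h)).antisymm
    (trdegRel_le_of_range_subset (subset_divHull_of_union_eq h.symm))

theorem pdelta_congr (h : divHull K (A ∪ Set.range b') = divHull K (A ∪ Set.range b)) :
    pdelta K A b' = pdelta K A b := by
  rw [pdelta, pdelta, trdegRel_congr h, ldimRel_congr h]

theorem MinPrealg.of_divHull_eq (hb : MinPrealg K A b)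
    (h : divHull K (A ∪ Set.range b') = divHull K (A ∪ Set.range b)) : MinPrealg K A b' := by
  obtain ⟨hn, hldim, hdelta, hmin⟩ := hb
  refine ⟨hn, (ldimRel_congr h).trans hldim, (pdelta_congr h).trans hdelta, fun B hB hAB hBb' => ?_⟩
  have hunion : divHull K (B ∪ Set.range b') = divHull K (B ∪ Set.range b) := by
    simpa [← Set.union_assoc, Set.union_eq_left.2 hAB.subset] using divHull_union_congr B h
  rw [pdelta_congr hunion]
  exact hmin B hB hAB (h ▸ hBb')

end MinPrealg

theorem minPrealg_of_corrTorus_general (K : Type) [Field K] [Infinite K] (A : Set Kˣ) {n : ℕ}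
    (b : Fin n → Kˣ) (hb : MinPrealg K A b) (T : Set ((Fin n ⊕ Fin n) → Kˣ))
    (hT : IsAlgSubgroup K T) (hdim : vdim K T ≤ n) (hfst : ∀ x : Fin n → Kˣ, ∃ y, Sum.elim x y ∈ T)
    (hsnd : ∀ y : Fin n → Kˣ, ∃ x, Sum.elim x y ∈ T) (b' : Fin n → Kˣ)
    (hbb' : Sum.elim b b' ∈ T) :
    divHull K (A ∪ Set.range b') = divHull K (A ∪ Set.range b) ∧ MinPrealg K A b' := by
  have hhull : divHull K (A ∪ Set.range b') = divHull K (A ∪ Set.range b) :=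
    divHull_union_congr A <|
      divHull_range_eq_of_correspondence hT (by simpa using hdim) hfst hsnd hbb'
  exact ⟨hhull, hb.of_divHull_eq hhull⟩

/-- Minimal prealgebraic extensions are preserved under toric
correspondences: if `⟨A ∪ b⟩/A` is minimal prealgebraic of length `n`, `T` is a
correspondence torus and `(b, b') ∈ T`, then `⟨A ∪ b'⟩ = ⟨A ∪ b⟩` and `⟨A ∪ b'⟩/A` is
minimal prealgebraic of length `n`. -/
theorem minPrealg_of_corrTorus
    (K : Type) [Field K] [IsAlgClosed K] [CharZero K]
    (A : Set Kˣ) (hA : A = ↑(divHull K A))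
    {n : ℕ} (b : Fin n → Kˣ) (hb : MinPrealg K A b)
    (T : Set ((Fin n ⊕ Fin n) → Kˣ)) (hT : IsCorrTorus K T)
    (b' : Fin n → Kˣ) (hbb' : Sum.elim b b' ∈ T) :
    divHull K (A ∪ Set.range b') = divHull K (A ∪ Set.range b) ∧ MinPrealg K A b' := by
  obtain ⟨⟨hsub, -⟩, hdim, hfst, hsnd⟩ := hT
  exact minPrealg_of_corrTorus_general K A b hb T hsub hdim.le hfst hsnd b' hbb'

end BadFields
end
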